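/- arXiv:2603.02533 — 12 statements merged into one kernel-verified Lean document; each statement's English description precedes it below -/
import Mathlib

section
/- For every γ ≥ 0 and every p ∈ (0,1), the second derivative of p ↦ L_γ(p) at p equals ((1-p)^(γ-2)/p²)·[γ(1-γ)·p²·log p + 2γ·p(1-p) + (1-p)²], this quantity is strictly positive, and consequently p ↦ L_γ(p) is strictly convex on (0,1). -/
/-- The focal-loss `L_γ(p) = (1-p)^γ log(1/p)`. -/
noncomputable def focalLoss (γ p : ℝ) : ℝ := (1 - p) ^ γ * Real.log (1 / p)

lemma focalLoss_hasDerivAt (γ p : ℝ) (hp : p ∈ Set.Ioo (0 : ℝ) 1) :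
    HasDerivAt (focalLoss γ) (γ * (1 - p) ^ (γ - 1) * Real.log p - (1 - p) ^ γ * p⁻¹) p := by
  obtain ⟨h0, h1⟩ := hp
  have hq : HasDerivAt (fun x : ℝ => 1 - x) (-1) p := by
    simpa using (hasDerivAt_id p).const_sub 1
  have h := (hq.rpow_const (p := γ) (Or.inl (by linarith))).mul (Real.hasDerivAt_log h0.ne').neg
  have e : focalLoss γ = (fun x : ℝ => (1 - x) ^ γ) * (-Real.log) := by
    funext x
    simp [focalLoss]
  rw [e]
  refine h.congr_deriv ?_
  simp only [Pi.neg_apply]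
  ring

lemma focalLoss_bracket_pos (γ p : ℝ) (hγ : 0 ≤ γ) (hp : p ∈ Set.Ioo (0 : ℝ) 1) :
    0 < γ * (1 - γ) * p ^ 2 * Real.log p + 2 * γ * p * (1 - p) + (1 - p) ^ 2 := by
  obtain ⟨h0, h1⟩ := hp
  have hq : 0 < 1 - p := by linarith
  have hsq : 0 < (1 - p) ^ 2 := by positivity
  have hA : 0 ≤ γ * p * (1 - p) := by positivity
  rcases le_total γ 1 with h | h
  · have hl := Real.one_sub_inv_le_log_of_pos h0
    have hc : 0 ≤ γ * (1 - γ) * p ^ 2 :=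
      mul_nonneg (mul_nonneg hγ (by linarith)) (by positivity)
    have h2 := mul_le_mul_of_nonneg_left hl hc
    have h3 : γ * (1 - γ) * p ^ 2 * (1 - p⁻¹) = - ((1 - γ) * (γ * p * (1 - p))) := by
      field_simp
      ring
    have h4 : 0 ≤ γ * (γ * p * (1 - p)) := mul_nonneg hγ hA
    nlinarith
  · have hl := (Real.log_neg h0 h1).le
    have h5 : 0 ≤ γ * (γ - 1) * p ^ 2 * (- Real.log p) :=
      mul_nonneg (mul_nonneg (mul_nonneg hγ (by linarith)) (by positivity)) (by linarith)
    nlinarith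

lemma focalLoss_hasDerivAt_deriv (γ p : ℝ) (hp : p ∈ Set.Ioo (0 : ℝ) 1) :
    HasDerivAt (deriv (focalLoss γ))
        ((1 - p) ^ (γ - 2) / p ^ 2 *
          (γ * (1 - γ) * p ^ 2 * Real.log p + 2 * γ * p * (1 - p) + (1 - p) ^ 2)) p := by
  have hev : deriv (focalLoss γ) =ᶠ[nhds p]
      (fun x => γ * (1 - x) ^ (γ - 1) * Real.log x - (1 - x) ^ γ * x⁻¹) := by
    filter_upwards [isOpen_Ioo.mem_nhds hp] with x hx
    exact (focalLoss_hasDerivAt γ x hx).deriv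
  obtain ⟨h0, h1⟩ := hp
  have hq : 0 < 1 - p := by linarith
  have hd : HasDerivAt (fun x : ℝ => 1 - x) (-1) p := by
    simpa using (hasDerivAt_id p).const_sub 1
  have ha := ((hd.rpow_const (p := γ - 1) (Or.inl hq.ne')).const_mul γ).mul
    (Real.hasDerivAt_log h0.ne')
  have hb := (hd.rpow_const (p := γ) (Or.inl hq.ne')).mul (hasDerivAt_inv h0.ne')
  have h := ha.sub hb
  refine HasDerivAt.congr_of_eventuallyEq ?_ hev
  refine HasDerivAt.congr_deriv h ?_
  have e1 : (1 - p) ^ (γ - 1) = (1 - p) ^ (γ - 2) * (1 - p) := by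
    rw [← Real.rpow_add_one hq.ne']
    congr 1
    ring
  have e2 : (1 - p) ^ γ = (1 - p) ^ (γ - 2) * (1 - p) ^ 2 := by
    rw [← Real.rpow_add_natCast hq.ne']
    congr 1
    push_cast
    ring
  have e3 : γ - 1 - 1 = γ - 2 := by ring
  simp only [e3, e1, e2]
  field_simp
  ring

/-- for every `γ ≥ 0` and `p ∈ (0,1)`, the second derivative of
`p ↦ L_γ(p)` at `p` equals
`((1-p)^(γ-2)/p²) (γ(1-γ) p² log p + 2γ p(1-p) + (1-p)²)`, this quantity is strictly
positive, and `L_γ` is strictly convex on `(0,1)`. -/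
theorem focalLoss_second_deriv_pos_and_strictConvexOn (γ : ℝ) (hγ : 0 ≤ γ) :
    (∀ p ∈ Set.Ioo (0 : ℝ) 1,
      HasDerivAt (deriv (focalLoss γ))
        ((1 - p) ^ (γ - 2) / p ^ 2 *
          (γ * (1 - γ) * p ^ 2 * Real.log p + 2 * γ * p * (1 - p) + (1 - p) ^ 2)) p ∧
      0 < (1 - p) ^ (γ - 2) / p ^ 2 *
          (γ * (1 - γ) * p ^ 2 * Real.log p + 2 * γ * p * (1 - p) + (1 - p) ^ 2)) ∧
    StrictConvexOn ℝ (Set.Ioo 0 1) (focalLoss γ) := by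
  have key : ∀ p ∈ Set.Ioo (0 : ℝ) 1,
      0 < (1 - p) ^ (γ - 2) / p ^ 2 *
          (γ * (1 - γ) * p ^ 2 * Real.log p + 2 * γ * p * (1 - p) + (1 - p) ^ 2) := by
    intro p hp
    have hq : 0 < 1 - p := by linarith [hp.2]
    have h0 := hp.1
    exact mul_pos (by positivity) (focalLoss_bracket_pos γ p hγ hp)
  refine ⟨fun p hp => ⟨focalLoss_hasDerivAt_deriv γ p hp, key p hp⟩, ?_⟩
  refine strictConvexOn_of_deriv2_pos' (convex_Ioo 0 1)
    (fun x hx => (focalLoss_hasDerivAt γ x hx).continuousAt.continuousWithinAt) ?_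
  intro x hx
  have h := (focalLoss_hasDerivAt_deriv γ x hx).deriv
  simp only [Function.iterate_succ, Function.iterate_zero, Function.comp_apply, id]
  rw [h]
  exact key x hx
end

section
/- The map p ↦ κ(p) is strictly decreasing on the interval (0,1). -/
lemma kappa_aux1 (t : ℝ) (ht : 0 < t) : 2 < Real.exp t * (t ^ 2 - 2 * t + 2) := by
  have hd : ∀ x : ℝ, HasDerivAt (fun t : ℝ => Real.exp t * (t ^ 2 - 2 * t + 2))
      (Real.exp x * x ^ 2) x := by
    intro x
    have h := (Real.hasDerivAt_exp x).mul
      ((((hasDerivAt_id x).pow 2).sub ((hasDerivAt_id x).const_mul 2)).add_const 2)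
    refine (h.congr_deriv ?_)
    simp
    ring
  have hm : StrictMonoOn (fun t : ℝ => Real.exp t * (t ^ 2 - 2 * t + 2)) (Set.Ici 0) := by
    apply strictMonoOn_of_deriv_pos (convex_Ici 0)
    · exact fun x _ => (hd x).continuousAt.continuousWithinAt
    · intro x hx
      rw [interior_Ici] at hx
      rw [(hd x).deriv]
      have : 0 < x := hx
      positivity
  have := hm (Set.mem_Ici.2 le_rfl) (Set.mem_Ici.2 ht.le) ht
  simpa using this

lemma kappa_aux2 : StrictMonoOn (fun t : ℝ => Real.exp t - 2 * (Real.exp t - 1) / t)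
    (Set.Ioi 0) := by
  have hd : ∀ x : ℝ, 0 < x → HasDerivAt (fun t : ℝ => Real.exp t - 2 * (Real.exp t - 1) / t)
      ((Real.exp x * (x ^ 2 - 2 * x + 2) - 2) / x ^ 2) x := by
    intro x hx
    have h := (Real.hasDerivAt_exp x).sub
      ((((Real.hasDerivAt_exp x).sub_const 1).const_mul 2).div (hasDerivAt_id x) hx.ne')
    refine (h.congr_deriv ?_)
    simp only [id]
    field_simp
    ring
  apply strictMonoOn_of_deriv_pos (convex_Ioi 0)
  · exact fun x hx => (hd x hx).continuousAt.continuousWithinAt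
  · intro x hx
    rw [interior_Ioi] at hx
    have hx' : 0 < x := hx
    rw [(hd x hx').deriv]
    have := kappa_aux1 x hx'
    apply div_pos (by linarith) (by positivity)

/-- the map `κ(p) = 1/p − 2(1-p)/(p log(1/p))` is strictly decreasing
on `(0,1)`. -/
theorem kappa_strictAntiOn :
    StrictAntiOn (fun p : ℝ => 1 / p - 2 * (1 - p) / (p * Real.log (1 / p)))
      (Set.Ioo 0 1) := by
  have key : ∀ p : ℝ, p ∈ Set.Ioo (0 : ℝ) 1 → 0 < Real.log (1 / p) ∧
      1 / p - 2 * (1 - p) / (p * Real.log (1 / p)) =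
      Real.exp (Real.log (1 / p)) - 2 * (Real.exp (Real.log (1 / p)) - 1) / Real.log (1 / p) := by
    rintro p ⟨h0, h1⟩
    have hl : 0 < Real.log (1 / p) := Real.log_pos (by rw [lt_div_iff₀ h0]; linarith)
    refine ⟨hl, ?_⟩
    rw [Real.exp_log (by positivity)]
    generalize Real.log (1 / p) = L at hl
    field_simp
  intro p hp q hq hpq
  obtain ⟨lp, ep⟩ := key p hp
  obtain ⟨lq, eq⟩ := key q hq
  simp only [ep, eq]
  exact kappa_aux2 lq lp (Real.log_lt_log (one_div_pos.2 hq.1)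
    (one_div_lt_one_div_of_lt hp.1 hpq))
end

section
/- For every γ ≥ 0 and every u ∈ (0, 1/3], one has φ_γ(u) ≥ φ_γ((1-u)/2). -/
/-- `φ_γ(p) = p (1-p)^(γ-1) (γ log(1/p) + (1-p)/p)`. -/
noncomputable def phiGamma (γ p : ℝ) : ℝ :=
  p * (1 - p) ^ (γ - 1) * (γ * Real.log (1 / p) + (1 - p) / p)

theorem phiG_log_three : Real.log 3 ≤ 1.2 := by
  have h2 := Real.log_two_lt_d9
  have h : Real.log (3/2) ≤ 1/2 := by
    have := Real.log_le_sub_one_of_pos (show (0:ℝ) < 3/2 by norm_num)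
    linarith
  have h3 : Real.log 3 = Real.log 2 + Real.log (3/2) := by
    rw [← Real.log_mul (by norm_num) (by norm_num)]; norm_num
  linarith

theorem phiG_step (u : ℝ) (h0 : 0 < u) (h1 : u ≤ 1/3) :
    2 * (1 - u) * Real.log 3 ≤ (1 + u) * (-Real.log u) := by
  have hc := phiG_log_three
  have hc0 : 0 < Real.log 3 := Real.log_pos (by norm_num)
  obtain ⟨s, hs0, hs⟩ : ∃ s : ℝ, 0 < s ∧ u = s ^ 2 / 3 :=
    ⟨Real.sqrt (3 * u), Real.sqrt_pos.2 (by linarith), by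
      rw [Real.sq_sqrt (by linarith)]; ring⟩
  have hs1 : s ≤ 1 := by nlinarith
  have hl := Real.log_le_sub_one_of_pos hs0
  have e : Real.log u = 2 * Real.log s - Real.log 3 := by
    rw [hs, Real.log_div (by positivity) (by norm_num), Real.log_pow]; norm_num
  rw [e]
  have k1 : (1 + u) * (2 * (1 - s)) ≤ (1 + u) * (2 * (-Real.log s)) := by
    apply mul_le_mul_of_nonneg_left <;> linarith
  have k2 : (1 - 3 * u) * Real.log 3 ≤ (1 + u) * (2 * (1 - s)) := by
    have a : 1 - 3 * u = (1 - s) * (1 + s) := by rw [hs]; ring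
    have b : (1 + s) * Real.log 3 ≤ 2 * (1 + u) := by
      rw [hs]; nlinarith [sq_nonneg (s - 0.9)]
    rw [a]
    nlinarith [mul_le_mul_of_nonneg_left b (sub_nonneg.2 hs1)]
  linarith

theorem phiG_key (u : ℝ) (h0 : 0 < u) (h1 : u ≤ 1/3) :
    ((1 - u) / (1 + u)) * (Real.log 2 - Real.log (1 - u)) ≤
      (Real.log 2 + Real.log (1 - u) - Real.log (1 + u)) + u / (1 - u) * (-Real.log u) := by
  have hs := phiG_step u h0 h1
  have c1 : 3 * u * (Real.log 2 - Real.log 3) ≤ Real.log (1 - u) := by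
    have := (strictConcaveOn_log_Ioi.concaveOn).2 (show (1:ℝ) ∈ Set.Ioi 0 by simp)
      (show (2/3:ℝ) ∈ Set.Ioi 0 by norm_num) (show 0 ≤ 1 - 3 * u by linarith)
      (show 0 ≤ 3 * u by linarith) (by ring)
    simp only [smul_eq_mul, Real.log_one] at this
    rw [Real.log_div (by norm_num) (by norm_num)] at this
    rw [show 1 - u = (1 - 3 * u) * 1 + 3 * u * (2/3) by ring]
    linarith
  have c2 : (1 + u) * Real.log (1 + u) ≤ 4 * u * (2 * Real.log 2 - Real.log 3) := by
    have := Real.convexOn_mul_log.2 (show (1:ℝ) ∈ Set.Ici 0 by simp)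
      (show (4/3:ℝ) ∈ Set.Ici 0 by norm_num) (show 0 ≤ 1 - 3 * u by linarith)
      (show 0 ≤ 3 * u by linarith) (by ring)
    simp only [smul_eq_mul, Real.log_one] at this
    rw [Real.log_div (by norm_num) (by norm_num), show (4:ℝ) = 2 ^ 2 by norm_num,
      Real.log_pow] at this
    rw [show (1 - 3 * u) * 1 + 3 * u * ((2:ℝ)^2/3) = 1 + u by ring] at this
    push_cast at this
    linarith
  have p1 : 0 < 1 - u := by linarith
  have p2 : 0 < 1 + u := by linarith
  have c3 : 2 * u * Real.log 3 ≤ (1 + u) * (u / (1 - u) * (-Real.log u)) := by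
    rw [show (1 + u) * (u / (1 - u) * (-Real.log u)) =
      u * ((1 + u) * (-Real.log u)) / (1 - u) by ring, le_div_iff₀ p1]
    nlinarith [mul_le_mul_of_nonneg_left hs h0.le]
  rw [div_mul_eq_mul_div, div_le_iff₀ p2]
  nlinarith

theorem phiG_eq (γ p : ℝ) (h0 : 0 < p) (h1 : p < 1) :
    phiGamma γ p = (1 - p) ^ γ * (1 + γ * (p / (1 - p) * (-Real.log p))) := by
  have h : 0 < 1 - p := by linarith
  unfold phiGamma
  rw [Real.rpow_sub_one h.ne', one_div, Real.log_inv]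
  field_simp
  ring

/-- for every `γ ≥ 0` and every `u ∈ (0, 1/3]`,
`φ_γ(u) ≥ φ_γ((1-u)/2)`. -/
theorem phiGamma_ge_phiGamma_midpoint (γ : ℝ) (hγ : 0 ≤ γ)
    (u : ℝ) (hu : u ∈ Set.Ioc (0 : ℝ) (1 / 3)) :
    phiGamma γ ((1 - u) / 2) ≤ phiGamma γ u := by
  obtain ⟨h0, h1⟩ := hu
  have p1 : 0 < 1 - u := by linarith
  have p2 : 0 < 1 + u := by linarith
  have key := phiG_key u h0 h1
  rw [phiG_eq γ u h0 (by linarith), phiG_eq γ ((1 - u) / 2) (by linarith) (by linarith)]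
  rw [show 1 - (1 - u) / 2 = (1 + u) / 2 by ring,
    show (1 - u) / 2 / ((1 + u) / 2) = (1 - u) / (1 + u) by field_simp,
    Real.log_div p1.ne' (by norm_num)]
  rw [show -(Real.log (1 - u) - Real.log 2) = Real.log 2 - Real.log (1 - u) by ring]
  set B := (1 - u) / (1 + u) * (Real.log 2 - Real.log (1 - u))
  have hA : 0 ≤ u / (1 - u) * (-Real.log u) :=
    mul_nonneg (by positivity) (by linarith [Real.log_nonpos h0.le (by linarith)])
  set A := u / (1 - u) * (-Real.log u)
  have hr0 : 0 ≤ Real.log 2 + Real.log (1 - u) - Real.log (1 + u) := by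
    rw [← Real.log_mul (by norm_num) p1.ne', sub_nonneg]
    exact Real.log_le_log p2 (by linarith)
  set r := Real.log 2 + Real.log (1 - u) - Real.log (1 + u) with hr
  have e : (1 - u) ^ γ = ((1 + u) / 2) ^ γ * Real.exp (γ * r) := by
    rw [Real.rpow_def_of_pos p1, Real.rpow_def_of_pos (by positivity), ← Real.exp_add,
      Real.log_div p2.ne' (by norm_num), hr]
    congr 1; ring
  rw [e, mul_assoc]
  apply mul_le_mul_of_nonneg_left _ (by positivity)
  have he := Real.add_one_le_exp (γ * r)
  have hAγ : 0 ≤ γ * A := mul_nonneg hγ hA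
  have hrγ : 0 ≤ γ * r := mul_nonneg hγ hr0
  nlinarith [mul_le_mul_of_nonneg_right he (show 0 ≤ 1 + γ * A by linarith),
    mul_le_mul_of_nonneg_left key hγ, mul_nonneg hAγ hrγ]
end

section
/- Let S be a nonempty finite set, P : S → ℝ with P(x) > 0 for all x ∈ S and ∑_{x∈S} P(x) = 1, and Q : S → ℝ with 0 < Q(x) ≤ 1 for all x ∈ S. Then (H_γ(P,Q))^(1/γ) tends to max_{x∈S} (1 − Q(x)) as γ → ∞. -/
/-- for a nonempty finite set (the index type `ι`), a probability
vector `P` with full support, and `Q` with `0 < Q x ≤ 1`, the quantity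
`(H_γ(P,Q))^(1/γ)` tends to `max_x (1 - Q x)` as `γ → ∞`. -/
theorem focalEntropy_rpow_inv_gamma_tendsto_max
    {ι : Type*} [Fintype ι] [Nonempty ι] (P Q : ι → ℝ)
    (hP : ∀ x, 0 < P x) (hPsum : ∑ x, P x = 1)
    (hQ : ∀ x, 0 < Q x ∧ Q x ≤ 1) :
    Filter.Tendsto
      (fun γ : ℝ => (∑ x, P x * (1 - Q x) ^ γ * Real.log (1 / Q x)) ^ (1 / γ))
      Filter.atTop
      (nhds (Finset.univ.sup' Finset.univ_nonempty (fun x => 1 - Q x))) := by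
  obtain ⟨x0, -, hx0⟩ := Finset.exists_mem_eq_sup' (Finset.univ_nonempty (α := ι)) (fun x => 1 - Q x)
  have hmax : ∀ x, 1 - Q x ≤ 1 - Q x0 := by
    intro x
    rw [← hx0]
    exact Finset.le_sup' (fun x => 1 - Q x) (Finset.mem_univ x)
  rw [hx0]
  have hlog : ∀ x, 0 ≤ Real.log (1 / Q x) := fun x =>
    Real.log_nonneg (by rw [le_div_iff₀ (hQ x).1]; linarith [(hQ x).2])
  have h0 : ∀ x, 0 ≤ 1 - Q x := fun x => by linarith [(hQ x).2]
  rcases (hQ x0).2.eq_or_lt with h1 | h1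
  · have hall : ∀ x, Q x = 1 := fun x => by linarith [hmax x, (hQ x).2]
    refine tendsto_const_nhds.congr' ?_
    filter_upwards [Filter.eventually_gt_atTop 0] with γ hγ
    simp [hall, Real.zero_rpow (inv_ne_zero hγ.ne')]
  · have hM : 0 < 1 - Q x0 := by linarith
    have hl0 : 0 < Real.log (1 / Q x0) :=
      Real.log_pos (by rw [lt_div_iff₀ (hQ x0).1]; linarith)
    have key : ∀ c : ℝ, 0 < c → Filter.Tendsto
        (fun γ : ℝ => c ^ (1 / γ) * (1 - Q x0)) Filter.atTop (nhds (1 - Q x0)) := by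
      intro c hc
      have h2 : Filter.Tendsto (fun γ : ℝ => 1 / γ) Filter.atTop (nhds 0) := by
        simpa using tendsto_inv_atTop_zero (𝕜 := ℝ)
      have h3 := ((Real.continuousAt_const_rpow (b := 0) hc.ne').tendsto.comp h2).mul_const (1 - Q x0)
      simpa [Function.comp_def] using h3
    have hnn : ∀ (γ : ℝ) x, 0 ≤ P x * (1 - Q x) ^ γ * Real.log (1 / Q x) := fun γ x =>
      mul_nonneg (mul_nonneg (hP x).le (Real.rpow_nonneg (h0 x) γ)) (hlog x)
    have hc : 0 < P x0 * Real.log (1 / Q x0) := mul_pos (hP x0) hl0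
    have hC : 0 < ∑ x, P x * Real.log (1 / Q x) :=
      Finset.sum_pos' (fun x _ => mul_nonneg (hP x).le (hlog x)) ⟨x0, Finset.mem_univ _, hc⟩
    have root : ∀ c : ℝ, 0 < c → ∀ γ : ℝ, 0 < γ →
        (c * (1 - Q x0) ^ γ) ^ (1 / γ) = c ^ (1 / γ) * (1 - Q x0) := by
      intro c hc γ hγ
      rw [Real.mul_rpow hc.le (Real.rpow_nonneg hM.le γ), ← Real.rpow_mul hM.le,
        mul_one_div_cancel hγ.ne', Real.rpow_one]
    refine tendsto_of_tendsto_of_tendsto_of_le_of_le' (key _ hc) (key _ hC) ?_ ?_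
    · filter_upwards [Filter.eventually_gt_atTop 0] with γ hγ
      rw [← root _ hc γ hγ]
      refine Real.rpow_le_rpow (mul_nonneg hc.le (Real.rpow_nonneg hM.le γ)) ?_ (by positivity)
      have := Finset.single_le_sum (fun x _ => hnn γ x) (Finset.mem_univ x0)
      linarith
    · filter_upwards [Filter.eventually_gt_atTop 0] with γ hγ
      rw [← root _ hC γ hγ]
      refine Real.rpow_le_rpow (Finset.sum_nonneg fun x _ => hnn γ x) ?_ (by positivity)
      rw [Finset.sum_mul]
      refine Finset.sum_le_sum fun x _ => ?_
      have h4 := Real.rpow_le_rpow (h0 x) (hmax x) hγ.le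
      have h5 := mul_le_mul_of_nonneg_left h4 (mul_nonneg (hP x).le (hlog x))
      linarith
end

section
/- Let γ ≥ 0, let S be a finite set with |S| ≥ 2, and let P : S → ℝ satisfy P(x) > 0 for all x ∈ S and ∑_{x∈S} P(x) = 1. Then there exists a unique α > 0 for which there exists a function Q* : S → ℝ with 0 < Q*(x) < 1 and L'_γ(Q*(x)) = -α/P(x) for all x ∈ S, and ∑_{x∈S} Q*(x) = 1; moreover, for this α the function Q* is unique. -/
/-- The closed form of the first derivative of the focal-loss,
`L'_γ(p) = -(1-p)^(γ-1) (γ log(1/p) + (1-p)/p)`. -/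
noncomputable def focalLossDeriv (γ p : ℝ) : ℝ :=
  -((1 - p) ^ (γ - 1) * (γ * Real.log (1 / p) + (1 - p) / p))

lemma focal_eq (γ p : ℝ) (h0 : 0 < p) (h1 : p < 1) :
    focalLossDeriv γ p = -((1 - p) ^ γ * (γ * (-Real.log p / (1 - p)) + 1 / p)) := by
  unfold focalLossDeriv
  have h2 : 0 < 1 - p := by linarith
  rw [Real.rpow_sub_one h2.ne', one_div, Real.log_inv]
  field_simp

lemma focal_strictMono (γ : ℝ) (hγ : 0 ≤ γ) (p q : ℝ) (h0 : 0 < p) (hpq : p < q) (h1 : q < 1) :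
    focalLossDeriv γ p < focalLossDeriv γ q := by
  rw [focal_eq γ p h0 (hpq.trans h1), focal_eq γ q (h0.trans hpq) h1, neg_lt_neg_iff]
  have hq0 : 0 < q := h0.trans hpq
  have hp1 : 0 < 1 - p := by linarith
  have hq1 : 0 < 1 - q := by linarith
  have hs := strictConcaveOn_log_Ioi.slope_anti_adjacent (x := p) (y := q) (z := 1)
    h0 (by simp) hpq h1
  rw [Real.log_one, div_lt_div_iff₀ hq1 (by linarith)] at hs
  have hA : -Real.log q / (1 - q) ≤ -Real.log p / (1 - p) := by
    rw [div_le_div_iff₀ hq1 hp1]; nlinarith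
  have hlq : 0 ≤ -Real.log q := by
    have := Real.log_neg hq0 h1
    linarith
  have hA0 : 0 ≤ -Real.log q / (1 - q) := div_nonneg hlq hq1.le
  have hB : 1 / q < 1 / p := one_div_lt_one_div_of_lt h0 hpq
  have hB0 : 0 < 1 / q := by positivity
  have hC : (1 - q) ^ γ ≤ (1 - p) ^ γ := Real.rpow_le_rpow hq1.le (by linarith) hγ
  have hC0 : 0 < (1 - q) ^ γ := Real.rpow_pos_of_pos hq1 γ
  have hmul := mul_le_mul_of_nonneg_left hA hγ
  have hm0 := mul_nonneg hγ hA0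
  calc (1 - q) ^ γ * (γ * (-Real.log q / (1 - q)) + 1 / q)
      < (1 - q) ^ γ * (γ * (-Real.log p / (1 - p)) + 1 / p) :=
        mul_lt_mul_of_pos_left (by linarith) hC0
    _ ≤ _ := mul_le_mul_of_nonneg_right hC (by linarith)

lemma focal_inj (γ : ℝ) (hγ : 0 ≤ γ) (p q : ℝ) (hp0 : 0 < p) (hp1 : p < 1) (hq0 : 0 < q)
    (hq1 : q < 1) (h : focalLossDeriv γ p ≤ focalLossDeriv γ q) : p ≤ q := by
  by_contra! hc
  exact absurd h (not_le.mpr (focal_strictMono γ hγ q p hq0 hc hp1))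

lemma focal_neg (γ : ℝ) (hγ : 0 ≤ γ) (p : ℝ) (h0 : 0 < p) (h1 : p < 1) :
    focalLossDeriv γ p < 0 := by
  rw [focal_eq γ p h0 h1, neg_lt_zero]
  have h2 : 0 < 1 - p := by linarith
  have hl : 0 ≤ -Real.log p := by
    have := Real.log_neg h0 h1
    linarith
  have := Real.rpow_pos_of_pos h2 γ
  positivity

lemma focal_cont (γ : ℝ) : ContinuousOn (focalLossDeriv γ) (Set.Ioo 0 1) := by
  unfold focalLossDeriv
  intro p hp
  have h0 : p ≠ 0 := hp.1.ne'
  have h1 : 1 - p ≠ 0 := by linarith [hp.2]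
  apply ContinuousAt.continuousWithinAt
  have a1 : ContinuousAt (fun p : ℝ => (1 - p) ^ (γ - 1)) p :=
    ContinuousAt.rpow_const (by fun_prop) (Or.inl h1)
  have a2 : ContinuousAt (fun p : ℝ => Real.log (1 / p)) p :=
    ContinuousAt.log (by fun_prop (disch := assumption)) (by simpa using h0)
  have a3 : ContinuousAt (fun p : ℝ => (1 - p) / p) p := by fun_prop (disch := assumption)
  exact (a1.mul ((continuousAt_const.mul a2).add a3)).neg

lemma focal_surj (γ : ℝ) (hγ : 0 < γ) (c : ℝ) (hc : 0 < c) :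
    ∃ p, 0 < p ∧ p < 1 ∧ focalLossDeriv γ p = -c := by
  have hlow : ∃ p ∈ Set.Ioo (0 : ℝ) 1, focalLossDeriv γ p ≤ -c := by
    have hd : 0 < (1 / 2 : ℝ) ^ γ / c := by positivity
    obtain ⟨p, hp⟩ : ∃ p, p = min (1 / 2) ((1 / 2 : ℝ) ^ γ / c) := ⟨_, rfl⟩
    have h0 : 0 < p := by rw [hp]; exact lt_min (by norm_num) hd
    have hh : p ≤ 1 / 2 := by rw [hp]; exact min_le_left _ _
    have hd' : p ≤ (1 / 2 : ℝ) ^ γ / c := by rw [hp]; exact min_le_right _ _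
    have h1 : p < 1 := by linarith
    refine ⟨p, ⟨h0, h1⟩, ?_⟩
    rw [focal_eq γ p h0 h1, neg_le_neg_iff]
    have h2 : 0 < 1 - p := by linarith
    have hl : 0 ≤ -Real.log p := by
      have := Real.log_neg h0 h1
      linarith
    have hA : 0 ≤ γ * (-Real.log p / (1 - p)) := by positivity
    have hC : (1 / 2 : ℝ) ^ γ ≤ (1 - p) ^ γ :=
      Real.rpow_le_rpow (by norm_num) (by linarith) hγ.le
    have hB : 0 < 1 / p := by positivity
    rw [le_div_iff₀ hc] at hd'
    calc c ≤ (1 / 2 : ℝ) ^ γ * (1 / p) := by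
          rw [mul_one_div, le_div_iff₀ h0]; linarith
      _ ≤ (1 - p) ^ γ * (1 / p) := mul_le_mul_of_nonneg_right hC hB.le
      _ ≤ _ := mul_le_mul_of_nonneg_left (by linarith) (Real.rpow_pos_of_pos h2 γ).le
  have hhigh : ∃ p ∈ Set.Ioo (0 : ℝ) 1, -c ≤ focalLossDeriv γ p := by
    have hd : 0 < (c / (2 * (γ + 1))) ^ (1 / γ) := by positivity
    obtain ⟨r, hr⟩ : ∃ r, r = min (1 / 2) ((c / (2 * (γ + 1))) ^ (1 / γ)) := ⟨_, rfl⟩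
    have h0 : 0 < r := by rw [hr]; exact lt_min (by norm_num) hd
    have hh : r ≤ 1 / 2 := by rw [hr]; exact min_le_left _ _
    have hd' : r ≤ (c / (2 * (γ + 1))) ^ (1 / γ) := by rw [hr]; exact min_le_right _ _
    have hp0 : 0 < 1 - r := by linarith
    refine ⟨1 - r, ⟨hp0, by linarith⟩, ?_⟩
    rw [focal_eq γ _ hp0 (by linarith), neg_le_neg_iff, sub_sub_cancel]
    have hrg : r ^ γ ≤ c / (2 * (γ + 1)) := by
      have := Real.rpow_le_rpow h0.le hd' hγ.le
      rwa [← Real.rpow_mul (by positivity), one_div_mul_cancel hγ.ne', Real.rpow_one] at this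
    have hB : 1 / (1 - r) ≤ 2 := by
      rw [div_le_iff₀ hp0]; linarith
    have hA : -Real.log (1 - r) / r ≤ 2 := by
      have := Real.one_sub_inv_le_log_of_pos hp0
      have h3 : -Real.log (1 - r) ≤ r * (1 / (1 - r)) := by
        have : r * (1 / (1 - r)) = (1 - r)⁻¹ - 1 := by field_simp; ring
        linarith
      rw [div_le_iff₀ h0]
      nlinarith
    have hmul := mul_le_mul_of_nonneg_left hA hγ.le
    calc r ^ γ * (γ * (-Real.log (1 - r) / r) + 1 / (1 - r))
        ≤ r ^ γ * (2 * (γ + 1)) :=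
          mul_le_mul_of_nonneg_left (by linarith) (Real.rpow_pos_of_pos h0 γ).le
      _ ≤ c := by rwa [le_div_iff₀ (by positivity)] at hrg
  obtain ⟨a, ha, hac⟩ := hlow
  obtain ⟨b, hb, hbc⟩ := hhigh
  obtain ⟨p, hp, hpc⟩ := isPreconnected_Ioo.intermediate_value ha hb (focal_cont γ) ⟨hac, hbc⟩
  exact ⟨p, hp.1, hp.2, hpc⟩

lemma focal_exists_pos {ι : Type*} [Fintype ι] (hcard : 2 ≤ Fintype.card ι)
    (γ : ℝ) (hγ : 0 < γ) (P : ι → ℝ) (hP : ∀ x, 0 < P x) (hPsum : ∑ x, P x = 1) :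
    ∃ α : ℝ, 0 < α ∧ ∃ Q : ι → ℝ,
      (∀ x, 0 < Q x ∧ Q x < 1 ∧ focalLossDeriv γ (Q x) = -α / P x) ∧ ∑ x, Q x = 1 := by
  have hne : Nonempty ι := Fintype.card_pos_iff.mp (by omega)
  let F : Set.Ioo (0 : ℝ) 1 → Set.Iio (0 : ℝ) :=
    fun p => ⟨focalLossDeriv γ p, focal_neg γ hγ.le p p.2.1 p.2.2⟩
  have hF : StrictMono F := fun p q h => focal_strictMono γ hγ.le p q p.2.1 h q.2.2
  have hFs : Function.Surjective F := by
    rintro ⟨y, hy⟩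
    obtain ⟨p, h0, h1, h⟩ := focal_surj γ hγ (-y) (by simpa using hy)
    exact ⟨⟨p, h0, h1⟩, Subtype.ext (by simpa [F] using h)⟩
  let e := hF.orderIsoOfSurjective F hFs
  have he : ∀ y, focalLossDeriv γ (e.symm y) = y := fun y =>
    congrArg Subtype.val (e.apply_symm_apply y)
  let D : ι → Set.Iio (0 : ℝ) → Set.Iio (0 : ℝ) :=
    fun x b => ⟨b / P x, div_neg_of_neg_of_pos b.2 (hP x)⟩
  let S : Set.Iio (0 : ℝ) → ℝ := fun b => ∑ x, (e.symm (D x b) : ℝ)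
  have hS : Continuous S := by
    refine continuous_finsetSum _ fun x _ => ?_
    refine continuous_subtype_val.comp (e.symm.continuous.comp ?_)
    exact Continuous.subtype_mk (continuous_subtype_val.div_const _) _
  have hP1 : ∀ x, P x ≤ 1 := fun x => by
    rw [← hPsum]; exact Finset.single_le_sum (fun i _ => (hP i).le) (Finset.mem_univ x)
  have hn : (2 : ℝ) ≤ Fintype.card ι := by exact_mod_cast hcard
  have hlow : ∃ b, S b ≤ 1 := by
    have hn0 : (0 : ℝ) < 1 / Fintype.card ι := by positivity
    have hn1 : (1 : ℝ) / Fintype.card ι < 1 := by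
      rw [div_lt_one (by linarith)]; linarith
    have hneg := focal_neg γ hγ.le _ hn0 hn1
    refine ⟨⟨_, hneg⟩, ?_⟩
    calc S ⟨_, hneg⟩ ≤ ∑ x : ι, (1 : ℝ) / Fintype.card ι := by
          refine Finset.sum_le_sum fun x _ => ?_
          refine focal_inj γ hγ.le _ _ (e.symm _).2.1 (e.symm _).2.2 hn0 hn1 ?_
          rw [he]
          change focalLossDeriv γ _ / P x ≤ _
          rw [div_le_iff₀ (hP x)]
          nlinarith [hP1 x]
      _ = 1 := by
          rw [Finset.sum_const, Finset.card_univ, nsmul_eq_mul]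
          field_simp
  have hhigh : ∃ b, 1 ≤ S b := by
    obtain ⟨m, hm⟩ := Finite.exists_min P
    have hneg := focal_neg γ hγ.le (1 / 2) (by norm_num) (by norm_num)
    refine ⟨⟨_, mul_neg_of_neg_of_pos hneg (hP m)⟩, ?_⟩
    calc (1 : ℝ) ≤ ∑ x : ι, (1 : ℝ) / 2 := by
          rw [Finset.sum_const, Finset.card_univ, nsmul_eq_mul]
          linarith
      _ ≤ _ := by
          refine Finset.sum_le_sum fun x _ => ?_
          refine focal_inj γ hγ.le _ _ (by norm_num) (by norm_num)
            (e.symm _).2.1 (e.symm _).2.2 ?_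
          rw [he]
          change _ ≤ focalLossDeriv γ _ * P m / P x
          rw [le_div_iff₀ (hP x)]
          nlinarith [hm x]
  have : PreconnectedSpace (Set.Iio (0 : ℝ)) :=
    isPreconnected_iff_preconnectedSpace.mp isPreconnected_Iio
  obtain ⟨b, hb⟩ := mem_range_of_exists_le_of_exists_ge hS hlow hhigh
  refine ⟨-b, neg_pos.mpr b.2, fun x => e.symm (D x b), fun x => ⟨(e.symm _).2.1,
    (e.symm _).2.2, ?_⟩, hb⟩
  rw [he, neg_neg]

lemma focal_exists_zero {ι : Type*} [Fintype ι] (hcard : 2 ≤ Fintype.card ι)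
    (P : ι → ℝ) (hP : ∀ x, 0 < P x) (hPsum : ∑ x, P x = 1) :
    ∃ α : ℝ, 0 < α ∧ ∃ Q : ι → ℝ,
      (∀ x, 0 < Q x ∧ Q x < 1 ∧ focalLossDeriv 0 (Q x) = -α / P x) ∧ ∑ x, Q x = 1 := by
  have : Nontrivial ι := Fintype.one_lt_card_iff_nontrivial.mp hcard
  refine ⟨1, one_pos, P, fun x => ?_, hPsum⟩
  have h1 : P x < 1 := by
    obtain ⟨y, hy⟩ := exists_ne x
    rw [← hPsum]
    exact Finset.single_lt_sum hy (Finset.mem_univ x) (Finset.mem_univ y) (hP y)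
      (fun k _ _ => (hP k).le)
  refine ⟨hP x, h1, ?_⟩
  rw [focal_eq 0 _ (hP x) h1]
  simp [neg_div]

lemma focal_le {ι : Type*} [Fintype ι] (hne : Nonempty ι)
    (γ : ℝ) (hγ : 0 ≤ γ) (P : ι → ℝ) (hP : ∀ x, 0 < P x) (α β : ℝ) (Q R : ι → ℝ)
    (hQ : ∀ x, 0 < Q x ∧ Q x < 1 ∧ focalLossDeriv γ (Q x) = -α / P x)
    (hQs : ∑ x, Q x = 1)
    (hR : ∀ x, 0 < R x ∧ R x < 1 ∧ focalLossDeriv γ (R x) = -β / P x)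
    (hRs : ∑ x, R x = 1) : α ≤ β := by
  by_contra! hc
  have : ∑ x, Q x < ∑ x, R x := by
    refine Finset.sum_lt_sum_of_nonempty Finset.univ_nonempty fun x _ => ?_
    by_contra! hx
    have hle : focalLossDeriv γ (R x) ≤ focalLossDeriv γ (Q x) := by
      rcases hx.eq_or_lt with h | h
      · rw [h]
      · exact (focal_strictMono γ hγ _ _ (hR x).1 h (hQ x).2.1).le
    rw [(hR x).2.2, (hQ x).2.2, div_le_div_iff_of_pos_right (hP x)] at hle
    linarith
  linarith

/-- existence and uniqueness of `α > 0` such that the first-order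
stationarity conditions `L'_γ(Q* x) = -α / P x` admit a probability vector solution
`Q*` with `0 < Q* x < 1`; moreover for this `α` the solution `Q*` is unique. -/
theorem focalEntropy_minimizer_exists_unique
    {ι : Type*} [Fintype ι] (hcard : 2 ≤ Fintype.card ι)
    (γ : ℝ) (hγ : 0 ≤ γ)
    (P : ι → ℝ) (hP : ∀ x, 0 < P x) (hPsum : ∑ x, P x = 1) :
    (∃! α : ℝ, 0 < α ∧ ∃ Q : ι → ℝ,
      (∀ x, 0 < Q x ∧ Q x < 1 ∧ focalLossDeriv γ (Q x) = -α / P x) ∧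
      ∑ x, Q x = 1) ∧
    (∀ α : ℝ, 0 < α → ∀ Q₁ Q₂ : ι → ℝ,
      ((∀ x, 0 < Q₁ x ∧ Q₁ x < 1 ∧ focalLossDeriv γ (Q₁ x) = -α / P x) ∧
        ∑ x, Q₁ x = 1) →
      ((∀ x, 0 < Q₂ x ∧ Q₂ x < 1 ∧ focalLossDeriv γ (Q₂ x) = -α / P x) ∧
        ∑ x, Q₂ x = 1) →
      Q₁ = Q₂) := by
  have hne : Nonempty ι := Fintype.card_pos_iff.mp (by omega)
  refine ⟨?_, ?_⟩
  · have hex : ∃ α : ℝ, 0 < α ∧ ∃ Q : ι → ℝ,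
        (∀ x, 0 < Q x ∧ Q x < 1 ∧ focalLossDeriv γ (Q x) = -α / P x) ∧ ∑ x, Q x = 1 := by
      rcases hγ.eq_or_lt with h | h
      · subst h
        exact focal_exists_zero hcard P hP hPsum
      · exact focal_exists_pos hcard γ h P hP hPsum
    obtain ⟨α, hα, Q, hQ, hQs⟩ := hex
    refine ⟨α, ⟨hα, Q, hQ, hQs⟩, ?_⟩
    rintro β ⟨_, R, hR, hRs⟩
    exact le_antisymm (focal_le hne γ hγ P hP β α R Q hR hRs hQ hQs)
      (focal_le hne γ hγ P hP α β Q R hQ hQs hR hRs)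
  · rintro α _ Q R ⟨hQ, _⟩ ⟨hR, _⟩
    funext x
    have h := (hQ x).2.2.trans (hR x).2.2.symm
    exact le_antisymm
      (focal_inj γ hγ _ _ (hQ x).1 (hQ x).2.1 (hR x).1 (hR x).2.1 h.le)
      (focal_inj γ hγ _ _ (hR x).1 (hR x).2.1 (hQ x).1 (hQ x).2.1 h.ge)
end

section
/- Let γ ≥ 0, let S be a finite set with |S| ≥ 2, and let P : S → ℝ satisfy P(x) > 0 for all x ∈ S and ∑_{x∈S} P(x) = 1. Suppose α > 0 and Q* : S → ℝ satisfy 0 < Q*(x) < 1, L'_γ(Q*(x)) = -α/P(x) for all x ∈ S, and ∑_{x∈S} Q*(x) = 1. Then for all x₁, x₂ ∈ S, P(x₁) ≥ P(x₂) implies Q*(x₁) ≥ Q*(x₂). -/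
theorem focal_aux (γ p q : ℝ) (hγ : 0 ≤ γ) (hp : 0 < p) (hpq : p < q) (hq : q < 1) :
    focalLossDeriv γ p < focalLossDeriv γ q := by
  have key : ∀ r : ℝ, 0 < r → r < 1 → focalLossDeriv γ r =
      -((1 - r) ^ γ * (γ * (-Real.log r / (1 - r)) + 1 / r)) := by
    intro r h0 h1
    have h2 : 0 < 1 - r := by linarith
    unfold focalLossDeriv
    rw [Real.rpow_sub_one h2.ne', one_div, Real.log_inv]
    field_simp
  have hq0 : 0 < q := hp.trans hpq
  have hp1 : 0 < 1 - p := by linarith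
  have hq1 : 0 < 1 - q := by linarith
  rw [key p hp (hpq.trans hq), key q hq0 hq]
  have hs := strictConcaveOn_log_Ioi.concaveOn.slope_anti_adjacent
    (Set.mem_Ioi.2 hp) (Set.mem_Ioi.2 one_pos) hpq hq
  have hlog : -Real.log q / (1 - q) ≤ -Real.log p / (1 - p) := by
    rw [Real.log_one, div_le_div_iff₀ hq1 (by linarith)] at hs
    rw [div_le_div_iff₀ hq1 hp1]
    linarith
  have hnn : 0 ≤ -Real.log q / (1 - q) :=
    div_nonneg (by linarith [Real.log_neg hq0 hq]) hq1.le
  have h1 : 1 / q < 1 / p := one_div_lt_one_div_of_lt hp hpq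
  have h2 : (1 - q) ^ γ ≤ (1 - p) ^ γ := Real.rpow_le_rpow hq1.le (by linarith) hγ
  have h3 : 0 < (1 - q) ^ γ := Real.rpow_pos_of_pos hq1 γ
  have h4 : γ * (-Real.log q / (1 - q)) ≤ γ * (-Real.log p / (1 - p)) :=
    mul_le_mul_of_nonneg_left hlog hγ
  have h5 : 0 ≤ γ * (-Real.log q / (1 - q)) := mul_nonneg hγ hnn
  have h6 : 0 < 1 / q := by positivity
  apply neg_lt_neg
  exact mul_lt_mul' h2 (by linarith) (by linarith) (h3.trans_le h2)

/-- the focal-entropy minimizer preserves the ordering of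
probabilities: `P x₁ ≥ P x₂` implies `Q* x₁ ≥ Q* x₂`. -/
theorem focalEntropy_minimizer_order_preserving
    {ι : Type*} [Fintype ι] (hcard : 2 ≤ Fintype.card ι)
    (γ : ℝ) (hγ : 0 ≤ γ)
    (P : ι → ℝ) (hP : ∀ x, 0 < P x) (hPsum : ∑ x, P x = 1)
    (α : ℝ) (hα : 0 < α)
    (Qstar : ι → ℝ)
    (hQstar : ∀ x, 0 < Qstar x ∧ Qstar x < 1 ∧
      focalLossDeriv γ (Qstar x) = -α / P x)
    (hQstarsum : ∑ x, Qstar x = 1) :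
    ∀ x₁ x₂ : ι, P x₂ ≤ P x₁ → Qstar x₂ ≤ Qstar x₁ := by
  intro x₁ x₂ h
  by_contra hlt
  obtain ⟨h1, h1', e1⟩ := hQstar x₁
  obtain ⟨h2, h2', e2⟩ := hQstar x₂
  have hk := focal_aux γ _ _ hγ h1 (not_le.1 hlt) h2'
  rw [e1, e2, neg_div, neg_div] at hk
  have : α / P x₁ ≤ α / P x₂ := div_le_div_of_nonneg_left hα.le (hP x₂) h
  linarith
end

section
/- Let γ ≥ 0, let S be a finite set with |S| ≥ 2 and N = |S|, and let P : S → ℝ satisfy P(x) > 0 for all x ∈ S and ∑_{x∈S} P(x) = 1. Suppose α > 0 and Q* : S → ℝ satisfy 0 < Q*(x) < 1, L'_γ(Q*(x)) = -α/P(x) for all x ∈ S, and ∑_{x∈S} Q*(x) = 1. Let p_min = min_{x∈S} P(x), p_max = max_{x∈S} P(x), and c = -L'_γ(1/N). Then α ≤ 1 + γ and p_min · c ≤ α ≤ p_max · c. -/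
theorem fl_eq (γ p : ℝ) (h0 : 0 < p) (h1 : p < 1) :
    -focalLossDeriv γ p = (1 - p) ^ γ * (γ * (-Real.log p / (1 - p)) + 1 / p) := by
  have h : 0 < 1 - p := by linarith
  unfold focalLossDeriv
  rw [Real.rpow_sub_one h.ne', one_div p, Real.log_inv]
  field_simp

theorem fl_slope {a b : ℝ} (h0 : 0 < a) (hab : a ≤ b) (h1 : b < 1) :
    -Real.log b / (1 - b) ≤ -Real.log a / (1 - a) := by
  have h := (strictConcaveOn_log_Ioi.concaveOn.neg).secant_mono (a := 1) (x := a) (y := b)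
    (by simp) (by simpa using h0) (by simpa using h0.trans_le hab) (by linarith) (by linarith) hab
  have e : ∀ t : ℝ, t < 1 → -Real.log t / (1 - t) = -(-Real.log t / (t - 1)) := by
    intro t ht
    rw [← div_neg, neg_sub]
  rw [e a (by linarith), e b h1]
  simp only [Pi.neg_apply, Real.log_one, neg_zero, sub_zero] at h
  linarith

theorem fl_anti {γ a b : ℝ} (hγ : 0 ≤ γ) (h0 : 0 < a) (hab : a ≤ b) (h1 : b < 1) :
    -focalLossDeriv γ b ≤ -focalLossDeriv γ a := by
  have hb0 : 0 < b := by linarith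
  rw [fl_eq γ a h0 (by linarith), fl_eq γ b hb0 h1]
  have hs := fl_slope h0 hab h1
  have hl : 0 ≤ -Real.log b / (1 - b) :=
    div_nonneg (by linarith [Real.log_nonpos hb0.le h1.le]) (by linarith)
  apply mul_le_mul
  · exact Real.rpow_le_rpow (by linarith) (by linarith) hγ
  · exact add_le_add (mul_le_mul_of_nonneg_left hs hγ) (one_div_le_one_div_of_le h0 hab)
  · positivity
  · exact Real.rpow_nonneg (by linarith) _

theorem fl_nonneg {γ a : ℝ} (hγ : 0 ≤ γ) (h0 : 0 < a) (h1 : a < 1) :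
    0 ≤ -focalLossDeriv γ a := by
  rw [fl_eq γ a h0 h1]
  have hl : 0 ≤ -Real.log a / (1 - a) :=
    div_nonneg (by linarith [Real.log_nonpos h0.le h1.le]) (by linarith)
  have := Real.rpow_nonneg (by linarith : 0 ≤ 1 - a) γ
  positivity

theorem fl_mul_le {γ a : ℝ} (hγ : 0 ≤ γ) (h0 : 0 < a) (h1 : a < 1) :
    a * -focalLossDeriv γ a ≤ 1 + γ := by
  rw [fl_eq γ a h0 h1]
  have h : 0 < 1 - a := by linarith
  have hl : -Real.log a / (1 - a) ≤ 1 / a := by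
    rw [div_le_div_iff₀ h h0]
    have := Real.one_sub_inv_le_log_of_pos h0
    have h2 := mul_le_mul_of_nonneg_right this h0.le
    rw [sub_mul, inv_mul_cancel₀ h0.ne'] at h2
    linarith
  have hr : (1 - a) ^ γ ≤ 1 := Real.rpow_le_one h.le (by linarith) hγ
  have hr0 := Real.rpow_nonneg h.le γ
  calc a * ((1 - a) ^ γ * (γ * (-Real.log a / (1 - a)) + 1 / a))
      ≤ a * ((1 - a) ^ γ * (γ * (1 / a) + 1 / a)) := by gcongr
    _ = (1 - a) ^ γ * (1 + γ) := by field_simp; ring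
    _ ≤ 1 * (1 + γ) := by gcongr
    _ = 1 + γ := one_mul _

/-- bounds on the Lagrange multiplier `α`:
`α ≤ 1 + γ` and `p_min · c ≤ α ≤ p_max · c` where `c = -L'_γ(1/N)`, `N = |S|`. -/
theorem focalEntropy_multiplier_bounds
    {ι : Type*} [Fintype ι] [Nonempty ι] (hcard : 2 ≤ Fintype.card ι)
    (γ : ℝ) (hγ : 0 ≤ γ)
    (P : ι → ℝ) (hP : ∀ x, 0 < P x) (hPsum : ∑ x, P x = 1)
    (α : ℝ) (hα : 0 < α)
    (Qstar : ι → ℝ)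
    (hQstar : ∀ x, 0 < Qstar x ∧ Qstar x < 1 ∧
      focalLossDeriv γ (Qstar x) = -α / P x)
    (hQstarsum : ∑ x, Qstar x = 1) :
    α ≤ 1 + γ ∧
    (Finset.univ.inf' Finset.univ_nonempty P) *
      (-focalLossDeriv γ (1 / (Fintype.card ι : ℝ))) ≤ α ∧
    α ≤ (Finset.univ.sup' Finset.univ_nonempty P) *
      (-focalLossDeriv γ (1 / (Fintype.card ι : ℝ))) := by
  have hE : ∀ x, α = P x * -focalLossDeriv γ (Qstar x) := by
    intro x
    rw [(hQstar x).2.2]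
    have := (hP x).ne'
    field_simp
  have hN : (2 : ℝ) ≤ (Fintype.card ι : ℝ) := by exact_mod_cast hcard
  have hN0 : 0 < 1 / (Fintype.card ι : ℝ) := by positivity
  have hN1 : 1 / (Fintype.card ι : ℝ) < 1 := by
    rw [div_lt_one (by linarith)]; linarith
  have hsum : ∑ _x : ι, 1 / (Fintype.card ι : ℝ) = 1 := by
    rw [Finset.sum_const, Finset.card_univ, nsmul_eq_mul]
    field_simp
  refine ⟨?_, ?_, ?_⟩
  · calc α = ∑ x, Qstar x * α := by rw [← Finset.sum_mul, hQstarsum, one_mul]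
      _ ≤ ∑ x, P x * (1 + γ) := by
        apply Finset.sum_le_sum
        intro x _
        have h1 := fl_mul_le hγ (hQstar x).1 (hQstar x).2.1
        calc Qstar x * α = P x * (Qstar x * -focalLossDeriv γ (Qstar x)) := by
              conv_lhs => rw [hE x]
              ring
          _ ≤ P x * (1 + γ) := mul_le_mul_of_nonneg_left h1 (hP x).le
      _ = 1 + γ := by rw [← Finset.sum_mul, hPsum, one_mul]
  · obtain ⟨x, -, hx⟩ := Finset.exists_le_of_sum_le (s := Finset.univ) (f := Qstar)
      (g := fun _ => 1 / (Fintype.card ι : ℝ)) Finset.univ_nonempty (by rw [hsum, hQstarsum])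
    rw [hE x]
    exact mul_le_mul (Finset.inf'_le _ (Finset.mem_univ x))
      (fl_anti hγ (hQstar x).1 hx hN1) (fl_nonneg hγ hN0 hN1) (hP x).le
  · obtain ⟨x, -, hx⟩ := Finset.exists_le_of_sum_le (s := Finset.univ) (g := Qstar)
      (f := fun _ => 1 / (Fintype.card ι : ℝ)) Finset.univ_nonempty (by rw [hsum, hQstarsum])
    have hs := Finset.le_sup' P (Finset.mem_univ x)
    calc α = P x * -focalLossDeriv γ (Qstar x) := hE x
      _ ≤ _ := mul_le_mul hs (fl_anti hγ hN0 hx (hQstar x).2.1)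
          (fl_nonneg hγ (hQstar x).1 (hQstar x).2.1) ((hP x).le.trans hs)
end

section
/- Let γ > 0, let S be a finite set with |S| ≥ 2, and let P : S → ℝ satisfy P(x) > 0 for all x ∈ S and ∑_{x∈S} P(x) = 1. Suppose α > 0 and Q* : S → ℝ satisfy 0 < Q*(x) < 1, L'_γ(Q*(x)) = -α/P(x) for all x ∈ S, and ∑_{x∈S} Q*(x) = 1. Then for every x ∈ S: if φ_γ(P(x)) ≤ α then Q*(x) ≤ P(x), and if φ_γ(P(x)) > α then Q*(x) > P(x). -/
/-- The negated derivative is strictly decreasing on `(0,1)`. -/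
lemma focal_aux_anti (γ a b : ℝ) (hγ : 0 < γ) (ha : 0 < a) (hab : a < b) (hb : b < 1) :
    (1 - b) ^ (γ - 1) * (γ * Real.log (1 / b) + (1 - b) / b) <
      (1 - a) ^ (γ - 1) * (γ * Real.log (1 / a) + (1 - a) / a) := by
  have key : ∀ p : ℝ, 0 < p → p < 1 →
      (1 - p) ^ (γ - 1) * (γ * Real.log (1 / p) + (1 - p) / p) =
        (1 - p) ^ γ * (γ * (-Real.log p / (1 - p)) + 1 / p) := by
    intro p hp hp1
    have h1 : 0 < 1 - p := by linarith
    rw [Real.rpow_sub_one h1.ne', one_div, Real.log_inv]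
    field_simp
  have hb0 : 0 < b := ha.trans hab
  have h1a : 0 < 1 - a := by linarith
  have h1b : 0 < 1 - b := by linarith
  rw [key a ha (hab.trans hb), key b hb0 hb]
  have hs := (strictConcaveOn_log_Ioi.concaveOn).slope_anti_adjacent (x := a) (y := b) (z := 1)
    ha (by simp) hab hb
  rw [Real.log_one, div_le_div_iff₀ h1b (by linarith)] at hs
  have h2 : -Real.log b / (1 - b) ≤ -Real.log a / (1 - a) := by
    rw [div_le_div_iff₀ h1b h1a]
    linarith
  have h3 : 0 < -Real.log b / (1 - b) := div_pos (neg_pos.2 (Real.log_neg hb0 hb)) h1b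
  have h4 : 1 / b < 1 / a := one_div_lt_one_div_of_lt ha hab
  have h5 : (1 - b) ^ γ < (1 - a) ^ γ := Real.rpow_lt_rpow h1b.le (by linarith) hγ
  have h6 : γ * (-Real.log b / (1 - b)) ≤ γ * (-Real.log a / (1 - a)) :=
    mul_le_mul_of_nonneg_left h2 hγ.le
  have h7 : 0 < γ * (-Real.log b / (1 - b)) := mul_pos hγ h3
  have h8 : 0 < 1 / b := by positivity
  exact mul_lt_mul'' h5 (by linarith) (Real.rpow_nonneg h1b.le _) (by linarith)

/-- for every `x`: if `φ_γ(P x) ≤ α` then `Q* x ≤ P x`, and if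
`φ_γ(P x) > α` then `Q* x > P x`. -/
theorem focalEntropy_minimizer_suppress_amplify
    {ι : Type*} [Fintype ι] (hcard : 2 ≤ Fintype.card ι)
    (γ : ℝ) (hγ : 0 < γ)
    (P : ι → ℝ) (hP : ∀ x, 0 < P x) (hPsum : ∑ x, P x = 1)
    (α : ℝ) (hα : 0 < α)
    (Qstar : ι → ℝ)
    (hQstar : ∀ x, 0 < Qstar x ∧ Qstar x < 1 ∧
      focalLossDeriv γ (Qstar x) = -α / P x)
    (hQstarsum : ∑ x, Qstar x = 1) :
    ∀ x : ι, (phiGamma γ (P x) ≤ α → Qstar x ≤ P x) ∧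
      (α < phiGamma γ (P x) → P x < Qstar x) := by
  intro x
  have hP1 : P x < 1 := by
    haveI : Nontrivial ι := Fintype.one_lt_card_iff_nontrivial.1 hcard
    obtain ⟨y, hy⟩ := exists_ne x
    rw [← hPsum]
    exact Finset.single_lt_sum hy (Finset.mem_univ x) (Finset.mem_univ y) (hP y)
      (fun k _ _ => (hP k).le)
  obtain ⟨hq0, hq1, hq⟩ := hQstar x
  have hp := hP x
  unfold focalLossDeriv at hq
  rw [neg_div, neg_inj, eq_div_iff hp.ne'] at hq
  unfold phiGamma
  rw [mul_assoc]
  constructor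
  · intro h
    by_contra! hc
    have := mul_lt_mul_of_pos_right (focal_aux_anti γ _ _ hγ hp hc hq1) hp
    linarith
  · intro h
    by_contra! hc
    rcases hc.eq_or_lt with he | hc
    · rw [he] at hq
      linarith
    · have := mul_lt_mul_of_pos_right (focal_aux_anti γ _ _ hγ hq0 hc hP1) hp
      linarith
end

section
/- Let γ > 0 and let S = {x₁, x₂} be a two-element set with P : S → ℝ satisfying P(x₁) > P(x₂) > 0 and P(x₁) + P(x₂) = 1. Suppose α > 0 and Q* : S → ℝ satisfy 0 < Q*(x) < 1, L'_γ(Q*(x)) = -α/P(x) for x ∈ S, and Q*(x₁) + Q*(x₂) = 1. Then Q*(x₁) < P(x₁) and Q*(x₂) > P(x₂); that is, the larger probability is strictly decreased and the smaller probability is strictly increased. -/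
theorem log_aux {a b : ℝ} (hb : 0 < b) (hab : b < a) (h : a + b = 1) :
    a * (-Real.log a) < b * (-Real.log b) := by
  have h1 := strictConcaveOn_log_Ioi.slope_anti_adjacent (x := b) (y := a) (z := 1)
    hb (by simp) hab (by linarith)
  rw [Real.log_one, div_lt_div_iff₀ (by linarith) (by linarith)] at h1
  have e : 1 - a = b := by linarith
  rw [e] at h1
  linarith

theorem main_aux {a b γ : ℝ} (hγ : 0 < γ) (hb : 0 < b) (hab : b < a) (h : a + b = 1) :
    a * (b ^ (γ - 1) * (γ * Real.log (1 / a) + b / a)) <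
    b * (a ^ (γ - 1) * (γ * Real.log (1 / b) + a / b)) := by
  have ha : 0 < a := hb.trans hab
  have hl := log_aux hb hab h
  have hY : 0 < b ^ γ := Real.rpow_pos_of_pos hb γ
  have hX : b ^ γ * (1 + γ * (Real.log a - Real.log b)) ≤ a ^ γ := by
    have : a ^ γ = b ^ γ * Real.exp (γ * (Real.log a - Real.log b)) := by
      rw [Real.rpow_def_of_pos ha, Real.rpow_def_of_pos hb, ← Real.exp_add]
      ring_nf
    rw [this]
    have := Real.add_one_le_exp (γ * (Real.log a - Real.log b))
    gcongr
    linarith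
  have hB : 0 < -Real.log b := by
    have := Real.log_neg hb (by linarith)
    linarith
  have hBA : 0 < Real.log a - Real.log b := by
    have := Real.log_lt_log hb hab
    linarith
  rw [Real.rpow_sub_one hb.ne', Real.rpow_sub_one ha.ne', one_div, one_div, Real.log_inv,
    Real.log_inv]
  generalize a ^ γ = X at *
  generalize b ^ γ = Y at *
  generalize Real.log b = u at *
  generalize Real.log a = v at *
  have k1 : Y * (1 + γ * (v - u)) * (a * b + γ * b ^ 2 * (-u)) ≤
      X * (a * b + γ * b ^ 2 * (-u)) := by
    gcongr
  have k2 : a * b + γ * a ^ 2 * (-v) <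
      (1 + γ * (v - u)) * (a * b + γ * b ^ 2 * (-u)) := by
    have p : 0 < γ * (v - u) * (γ * b ^ 2 * (-u)) := by positivity
    have q : 0 < γ * ((a + b) * (b * (-u) - a * (-v))) := by
      apply mul_pos hγ (mul_pos (by linarith) (by linarith))
    nlinarith
  have k3 := mul_lt_mul_of_pos_left k2 hY
  have k4 : Y * (a * b + γ * a ^ 2 * (-v)) < X * (a * b + γ * b ^ 2 * (-u)) := by
    linarith
  have e1 : a * (Y / b * (γ * -v + b / a)) = Y * (a * b + γ * a ^ 2 * (-v)) / (a * b) := by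
    field_simp
    ring
  have e2 : b * (X / a * (γ * -u + a / b)) = X * (a * b + γ * b ^ 2 * (-u)) / (a * b) := by
    field_simp
    ring
  rw [e1, e2]
  gcongr

/-- on a two-point support, the focal-entropy minimizer strictly
decreases the larger probability and strictly increases the smaller one. -/
theorem focalEntropy_minimizer_two_point
    {ι : Type*} (x₁ x₂ : ι) (hne : x₁ ≠ x₂) (hcover : ∀ x : ι, x = x₁ ∨ x = x₂)
    (γ : ℝ) (hγ : 0 < γ)
    (P : ι → ℝ) (hP2 : 0 < P x₂) (hP12 : P x₂ < P x₁) (hPsum : P x₁ + P x₂ = 1)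
    (α : ℝ) (hα : 0 < α)
    (Qstar : ι → ℝ)
    (hQstar : ∀ x : ι, 0 < Qstar x ∧ Qstar x < 1 ∧
      focalLossDeriv γ (Qstar x) = -α / P x)
    (hQstarsum : Qstar x₁ + Qstar x₂ = 1) :
    Qstar x₁ < P x₁ ∧ P x₂ < Qstar x₂ := by
  obtain ⟨ha, ha1, h1⟩ := hQstar x₁
  obtain ⟨hb, hb1, h2⟩ := hQstar x₂
  suffices hs : Qstar x₁ < P x₁ from ⟨hs, by linarith⟩
  by_contra hc
  rw [not_lt] at hc
  have hP1 : 0 < P x₁ := hP2.trans hP12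
  have hm := main_aux hγ hb (by linarith : Qstar x₂ < Qstar x₁) hQstarsum
  have ea : 1 - Qstar x₁ = Qstar x₂ := by linarith
  have eb : 1 - Qstar x₂ = Qstar x₁ := by linarith
  simp only [focalLossDeriv] at h1 h2
  rw [ea, neg_div, neg_inj] at h1
  rw [eb, neg_div, neg_inj] at h2
  rw [h1, h2] at hm
  have l1 : α ≤ Qstar x₁ * (α / P x₁) := by
    rw [← mul_div_assoc, le_div_iff₀ hP1]
    nlinarith
  have l2 : Qstar x₂ * (α / P x₂) ≤ α := by
    rw [← mul_div_assoc, div_le_iff₀ hP2]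
    nlinarith
  linarith
end

section
/- Let γ > 0, let S be a three-element set, and let P : S → ℝ satisfy P(x) > 0 for all x ∈ S and ∑_{x∈S} P(x) = 1. Suppose α > 0 and Q* : S → ℝ satisfy 0 < Q*(x) < 1, L'_γ(Q*(x)) = -α/P(x) for all x ∈ S, and ∑_{x∈S} Q*(x) = 1. Then for any x₀ ∈ S with P(x₀) = max_{x∈S} P(x), one has Q*(x₀) ≤ P(x₀). -/
namespace FocalAux

open Real Set

/-- `A q = q log(1/q) / (1-q)`. -/
noncomputable def A (q : ℝ) : ℝ := q * (-log q) / (1 - q)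

/-- `hh γ q = (1-q)^γ (1 + γ A q)`, which equals `-q L'_γ(q)`. -/
noncomputable def hh (γ q : ℝ) : ℝ := (1 - q) ^ γ * (1 + γ * A q)

lemma A_nonneg {q : ℝ} (h0 : 0 < q) (h1 : q < 1) : 0 ≤ A q := by
  have := log_neg h0 h1
  have h2 : 0 < 1 - q := by linarith
  have h3 : 0 < -log q := by linarith
  unfold A
  positivity

lemma hh_pos {γ q : ℝ} (hγ : 0 < γ) (h0 : 0 < q) (h1 : q < 1) : 0 < hh γ q := by
  have h2 : 0 < 1 - q := by linarith
  have := A_nonneg h0 h1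
  unfold hh
  positivity

lemma deriv_eq {γ q : ℝ} (h0 : 0 < q) (h1 : q < 1) :
    focalLossDeriv γ q = -(hh γ q / q) := by
  have h2 : 0 < 1 - q := by linarith
  unfold focalLossDeriv hh A
  rw [rpow_sub_one h2.ne', one_div, log_inv]
  field_simp
  ring

/-- Pointwise comparison independent of `γ`. -/
lemma hh_le {γ p q : ℝ} (hγ : 0 < γ) (hp : 0 < p) (hpq : p ≤ q) (hq : q < 1)
    (hk : log (1 - q) + A q ≤ log (1 - p) + A p) : hh γ q ≤ hh γ p := by
  have hp1 : 0 < 1 - p := by linarith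
  have hq1 : 0 < 1 - q := by linarith
  have hA := A_nonneg hp (by linarith : p < 1)
  have hd : log (1 - q) ≤ log (1 - p) := log_le_log hq1 (by linarith)
  set d := log (1 - p) - log (1 - q) with hdd
  have hd0 : 0 ≤ d := by linarith
  have e : (1 - p) ^ γ = (1 - q) ^ γ * exp (γ * d) := by
    rw [rpow_def_of_pos hp1, rpow_def_of_pos hq1, ← exp_add]
    congr 1
    rw [hdd]; ring
  unfold hh
  rw [e, mul_assoc]
  apply mul_le_mul_of_nonneg_left _ (by positivity)
  have h1 : 1 + γ * d ≤ exp (γ * d) := by linarith [add_one_le_exp (γ * d)]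
  have h2 : (1 + γ * d) * (1 + γ * A p) ≤ exp (γ * d) * (1 + γ * A p) :=
    mul_le_mul_of_nonneg_right h1 (by positivity)
  have h3 : γ * A q ≤ γ * (d + A p) := mul_le_mul_of_nonneg_left (by linarith) hγ.le
  have h4 : 0 ≤ (γ * d) * (γ * A p) := by positivity
  nlinarith

/-- `hh γ q / q` is strictly decreasing. -/
lemma g_anti {γ p q : ℝ} (hγ : 0 < γ) (hp : 0 < p) (hpq : p < q) (hq : q < 1) :
    hh γ q / q < hh γ p / p := by
  have hp1 : 0 < 1 - p := by linarith
  have hq1 : 0 < 1 - q := by linarith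
  have hq0 : 0 < q := by linarith
  have key : A q / q ≤ A p / p := by
    have e1 : A q / q = (-log q) / (1 - q) := by unfold A; field_simp
    have e2 : A p / p = (-log p) / (1 - p) := by unfold A; field_simp
    rw [e1, e2, div_le_div_iff₀ hq1 hp1]
    have a1 := one_sub_inv_le_log_of_pos (div_pos hq0 hp)
    rw [log_div hq0.ne' hp.ne', inv_div] at a1
    have a2 := one_sub_inv_le_log_of_pos hq0
    have b1 := mul_le_mul_of_nonneg_left a1 hq1.le
    have b2 := mul_le_mul_of_nonneg_left a2 (by linarith : 0 ≤ q - p)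
    have e3 : (1 - q) * (1 - p / q) = -((q - p) * (1 - q⁻¹)) := by field_simp; ring
    nlinarith
  have e (x : ℝ) : hh γ x / x = (1 - x) ^ γ * (1 / x + γ * (A x / x)) := by
    unfold hh; ring
  rw [e, e]
  have hA : 0 ≤ A q / q := div_nonneg (A_nonneg hq0 hq) hq0.le
  have c1 : (1 - q) ^ γ < (1 - p) ^ γ := rpow_lt_rpow hq1.le (by linarith) hγ
  have c2 : 1 / q < 1 / p := one_div_lt_one_div_of_lt hp hpq
  have c3 : γ * (A q / q) ≤ γ * (A p / p) := mul_le_mul_of_nonneg_left key hγ.le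
  exact mul_lt_mul'' c1 (by linarith) (by positivity) (by positivity)

/-- `H q = (1-q) log(1-q) - q log q`. -/
noncomputable def H (q : ℝ) : ℝ := (1 - q) * log (1 - q) - q * log q

lemma H_eq {q : ℝ} (h1 : q < 1) : H q = (1 - q) * (log (1 - q) + A q) := by
  have : 0 < 1 - q := by linarith
  unfold H A
  field_simp
  ring

lemma H_concave : ConcaveOn ℝ (Icc (0 : ℝ) (1 / 2)) H := by
  have hc : Continuous H := by
    unfold H
    exact (continuous_mul_log.comp (continuous_const.sub continuous_id)).sub continuous_mul_log
  refine concaveOn_of_hasDerivWithinAt2_nonpos (convex_Icc _ _) hc.continuousOn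
    (f' := fun q => -log (1 - q) - log q - 2) (f'' := fun q => 1 / (1 - q) - 1 / q) ?_ ?_ ?_
  · intro x hx
    rw [interior_Icc] at hx
    have hx0 : 0 < x := hx.1
    have hx1 : 0 < 1 - x := by linarith [hx.2]
    have d0 : HasDerivAt (fun q : ℝ => 1 - q) (-1) x := by
      simpa using (hasDerivAt_id x).const_sub 1
    have d := (d0.mul (d0.log hx1.ne')).sub ((hasDerivAt_id x).mul (hasDerivAt_log hx0.ne'))
    refine (d.congr_deriv ?_).hasDerivWithinAt
    simp only [id]
    field_simp
    ring
  · intro x hx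
    rw [interior_Icc] at hx
    have hx0 : 0 < x := hx.1
    have hx1 : 0 < 1 - x := by linarith [hx.2]
    have d0 : HasDerivAt (fun q : ℝ => 1 - q) (-1) x := by
      simpa using (hasDerivAt_id x).const_sub 1
    have d := (((d0.log hx1.ne').neg).sub (hasDerivAt_log hx0.ne')).sub_const 2
    refine (d.congr_deriv ?_).hasDerivWithinAt
    field_simp
  · intro x hx
    rw [interior_Icc] at hx
    have := one_div_le_one_div_of_le hx.1 (by linarith [hx.2] : x ≤ 1 - x)
    linarith

lemma concave_nonneg {f : ℝ → ℝ} {s : Set ℝ} (hf : ConcaveOn ℝ s f) {a b x : ℝ}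
    (ha : a ∈ s) (hb : b ∈ s) (fa : 0 ≤ f a) (fb : 0 ≤ f b) (h1 : a ≤ x) (h2 : x ≤ b) :
    0 ≤ f x :=
  le_trans (le_min fa fb) (hf.min_le_of_mem_Icc ha hb ⟨h1, h2⟩)

lemma H_nonneg {q : ℝ} (h0 : 0 ≤ q) (h1 : q ≤ 1 / 2) : 0 ≤ H q := by
  refine concave_nonneg H_concave (a := 0) (b := 1 / 2) ?_ ?_ ?_ ?_ h0 h1
  · norm_num
  · norm_num
  · simp [H]
  · simp only [H]; norm_num

/-- The auxiliary function for the boundary case. -/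
noncomputable def D (t : ℝ) : ℝ :=
  2 * ((1 - t) * log (1 - t)) - (1 - t) * ((1 + t) * log (1 + t)) - (1 + t) * (t * log t)
    + 2 * t * (1 - t) * log 2

lemma D_concave : ConcaveOn ℝ (Icc (0 : ℝ) (1 / 3)) D := by
  have hc : Continuous D := by
    have c1 : Continuous fun t : ℝ => (1 - t) * log (1 - t) :=
      continuous_mul_log.comp (continuous_const.sub continuous_id)
    have c2 : Continuous fun t : ℝ => (1 + t) * log (1 + t) :=
      continuous_mul_log.comp (continuous_const.add continuous_id)
    have c3 : Continuous fun t : ℝ => t * log t := continuous_mul_log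
    unfold D
    fun_prop
  refine concaveOn_of_hasDerivWithinAt2_nonpos (convex_Icc _ _) hc.continuousOn
    (f' := fun t => -2 * log (1 - t) + 2 * t * log (1 + t) - (1 + 2 * t) * log t - 4
      + 2 * (1 - 2 * t) * log 2)
    (f'' := fun t => 2 / (1 - t) + 2 * log (1 + t) + 2 * t / (1 + t) - 2 * log t - 1 / t - 2
      - 4 * log 2) ?_ ?_ ?_
  · intro x hx
    rw [interior_Icc] at hx
    have hx0 : 0 < x := hx.1
    have hx1 : 0 < 1 - x := by linarith [hx.2]
    have hx2 : 0 < 1 + x := by linarith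
    have di := hasDerivAt_id' x
    have d0 : HasDerivAt (fun q : ℝ => 1 - q) (-1) x := di.const_sub 1
    have d1 : HasDerivAt (fun q : ℝ => 1 + q) 1 x := di.const_add 1
    have d := ((((d0.mul (d0.log hx1.ne')).const_mul 2).sub
      (d0.mul (d1.mul (d1.log hx2.ne')))).sub (d1.mul (di.mul (hasDerivAt_log hx0.ne')))).add
      (((di.const_mul 2).mul d0).mul_const (log 2))
    refine (d.congr_deriv ?_).hasDerivWithinAt
    simp only [Pi.mul_apply]
    field_simp
    ring
  · intro x hx
    rw [interior_Icc] at hx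
    have hx0 : 0 < x := hx.1
    have hx1 : 0 < 1 - x := by linarith [hx.2]
    have hx2 : 0 < 1 + x := by linarith
    have di := hasDerivAt_id' x
    have d0 : HasDerivAt (fun q : ℝ => 1 - q) (-1) x := di.const_sub 1
    have d1 : HasDerivAt (fun q : ℝ => 1 + q) 1 x := di.const_add 1
    have d := ((((((d0.log hx1.ne').const_mul (-2)).add
      ((di.const_mul 2).mul (d1.log hx2.ne'))).sub
      (((di.const_mul 2).const_add 1).mul (hasDerivAt_log hx0.ne'))).sub_const 4).add
      ((((di.const_mul 2).const_sub 1).const_mul 2).mul_const (log 2)))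
    refine (d.congr_deriv ?_).hasDerivWithinAt
    field_simp
    ring
  · intro x hx
    rw [interior_Icc] at hx
    have hx0 : 0 < x := hx.1
    have hx3 : x < 1 / 3 := hx.2
    have hx1 : 0 < 1 - x := by linarith
    have hx2 : 0 < 1 + x := by linarith
    have b1 : 2 / (1 - x) ≤ 3 := by rw [div_le_iff₀ hx1]; linarith
    have b2 : log (1 + x) ≤ 1 / 3 := by linarith [log_le_sub_one_of_pos hx2]
    have b3 : 2 * x / (1 + x) ≤ 1 / 2 := by rw [div_le_iff₀ hx2]; linarith
    have b4 := one_sub_inv_le_log_of_pos (by positivity : 0 < 2 * x)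
    rw [log_mul two_ne_zero hx0.ne', mul_inv, ← one_div x] at b4
    have b5 := log_two_gt_d9
    linarith

lemma D_nonneg {t : ℝ} (h0 : 0 ≤ t) (h1 : t ≤ 1 / 3) : 0 ≤ D t := by
  refine concave_nonneg D_concave (a := 0) (b := 1 / 3) ?_ ?_ ?_ ?_ h0 h1
  · norm_num
  · norm_num
  · simp [D]
  · have e1 : log (1 - 1 / 3 : ℝ) = log 2 - log 3 := by
      rw [← log_div (by norm_num) (by norm_num)]; norm_num
    have e2 : log (1 + 1 / 3 : ℝ) = 2 * log 2 - log 3 := by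
      have : (1 + 1 / 3 : ℝ) = 2 ^ 2 / 3 := by norm_num
      rw [this, log_div (by norm_num) (by norm_num), log_pow]; norm_num
    have e3 : log (1 / 3 : ℝ) = - log 3 := by rw [one_div, log_inv]
    unfold D
    rw [e1, e2, e3]
    apply le_of_eq
    ring

/-- Boundary case: `k(1-2a) ≥ k(a)` in cleared form. -/
lemma boundary {a : ℝ} (h0 : 1 / 3 ≤ a) (h1 : a ≤ 1 / 2) :
    2 * a * H a ≤ (1 - a) * H (1 - 2 * a) := by
  have hD := D_nonneg (t := 1 - 2 * a) (by linarith) (by linarith)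
  have e1 : log (1 - (1 - 2 * a)) = log 2 + log a := by
    rw [← log_mul two_ne_zero (by linarith)]; congr 1; ring
  have e2 : log (1 + (1 - 2 * a)) = log 2 + log (1 - a) := by
    rw [← log_mul two_ne_zero (by linarith)]; congr 1; ring
  unfold D at hD
  unfold H
  rw [e1, e2] at hD
  rw [e1]
  nlinarith

lemma key {p a : ℝ} (hp : 0 < p) (hpa : p ≤ a) (hs : p + a ≤ 1) (hs2 : 1 ≤ p + 2 * a)
    (ha : a < 1) : log (1 - a) + A a ≤ log (1 - p) + A p := by
  have ha1 : 0 < 1 - a := by linarith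
  have hp1 : 0 < 1 - p := by linarith
  have Ea := H_eq ha
  have Ep := H_eq (by linarith : p < 1)
  set ka := log (1 - a) + A a
  set kp := log (1 - p) + A p
  rcases le_total (1 / 2) a with h | h
  · have n1 : 0 ≤ H p := H_nonneg hp.le (by linarith)
    have n2 : 0 ≤ H (1 - a) := H_nonneg ha1.le (by linarith)
    have n3 : H (1 - a) = - H a := by
      unfold H; rw [sub_sub_cancel]; ring
    have : ka ≤ 0 := by
      by_contra hc
      push Not at hc
      nlinarith [mul_pos ha1 hc]
    have : 0 ≤ kp := by
      by_contra hc
      push Not at hc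
      nlinarith [mul_pos_of_neg_of_neg hc (by linarith : -(1 - p) < 0)]
    linarith
  · have ha3 : 1 / 3 ≤ a := by linarith
    have hb := boundary ha3 h
    have hlin : ConcaveOn ℝ (Icc (0 : ℝ) (1 / 2)) (fun q => ka * q - ka) := by
      refine ⟨convex_Icc _ _, ?_⟩
      intro x _ y _ u v _ _ huv
      simp only [smul_eq_mul]
      have : v = 1 - u := by linarith
      subst this
      apply le_of_eq
      ring
    have hG := H_concave.add hlin
    have := concave_nonneg hG (a := 1 - 2 * a) (b := a) (x := p) ⟨by linarith, by linarith⟩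
      ⟨by linarith, by linarith⟩ ?_ ?_ (by linarith) hpa
    · simp only [Pi.add_apply] at this
      rw [Ep] at this
      have h5 : 0 ≤ (1 - p) * (kp - ka) := by linarith
      have := nonneg_of_mul_nonneg_right h5 hp1
      linarith
    · simp only [Pi.add_apply]
      rw [Ea] at hb
      have h5 : 0 ≤ (1 - a) * (H (1 - 2 * a) - 2 * a * ka) := by linarith
      have := nonneg_of_mul_nonneg_right h5 ha1
      linarith
    · simp only [Pi.add_apply]
      rw [Ea]
      apply le_of_eq
      ring

end FocalAux

/-- on a three-point support, the focal-entropy minimizer does not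
increase the maximum probability: if `P x₀` is maximal then `Q* x₀ ≤ P x₀`. -/
theorem focalEntropy_minimizer_three_point_max
    {ι : Type*} [Fintype ι] (hcard : Fintype.card ι = 3)
    (γ : ℝ) (hγ : 0 < γ)
    (P : ι → ℝ) (hP : ∀ x, 0 < P x) (hPsum : ∑ x, P x = 1)
    (α : ℝ) (hα : 0 < α)
    (Qstar : ι → ℝ)
    (hQstar : ∀ x, 0 < Qstar x ∧ Qstar x < 1 ∧
      focalLossDeriv γ (Qstar x) = -α / P x)
    (hQstarsum : ∑ x, Qstar x = 1) :
    ∀ x₀ : ι, (∀ x, P x ≤ P x₀) → Qstar x₀ ≤ P x₀ := by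
  intro x₀ hx₀
  classical
  have hq0 : ∀ x, 0 < Qstar x := fun x => (hQstar x).1
  have hq1 : ∀ x, Qstar x < 1 := fun x => (hQstar x).2.1
  have hh0 : ∀ x, 0 < FocalAux.hh γ (Qstar x) := fun x => FocalAux.hh_pos hγ (hq0 x) (hq1 x)
  have hrel : ∀ x, FocalAux.hh γ (Qstar x) / Qstar x = α / P x := by
    intro x
    have h1 := (hQstar x).2.2
    rw [FocalAux.deriv_eq (hq0 x) (hq1 x), neg_div] at h1
    linarith
  have hPeq : ∀ x, P x = α * Qstar x / FocalAux.hh γ (Qstar x) := by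
    intro x
    have h1 := hrel x
    have h2 := (hq0 x).ne'
    have h3 := (hP x).ne'
    have h4 := (hh0 x).ne'
    rw [div_eq_div_iff h2 h3] at h1
    rw [eq_div_iff h4]
    linarith
  have hQle : ∀ x, Qstar x ≤ Qstar x₀ := by
    intro x
    by_contra hc
    push Not at hc
    have h1 := FocalAux.g_anti hγ (hq0 x₀) hc (hq1 x)
    rw [hrel, hrel] at h1
    have h2 := div_le_div_of_nonneg_left hα.le (hP x) (hx₀ x)
    linarith
  have hbounds : ∀ x, x ≠ x₀ → Qstar x + Qstar x₀ ≤ 1 ∧ 1 ≤ Qstar x + 2 * Qstar x₀ := by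
    intro x hx
    have hsub : ({x, x₀} : Finset ι).card = 2 := Finset.card_pair hx
    have hcompl : (({x, x₀} : Finset ι)ᶜ).card = 1 := by
      rw [Finset.card_compl, hcard, hsub]
    obtain ⟨y, hy⟩ := Finset.card_eq_one.mp hcompl
    have hs := Finset.sum_add_sum_compl ({x, x₀} : Finset ι) Qstar
    rw [hy, Finset.sum_pair hx, Finset.sum_singleton, hQstarsum] at hs
    have := hq0 y
    have := hQle y
    constructor <;> linarith
  have hhle : ∀ x, FocalAux.hh γ (Qstar x₀) ≤ FocalAux.hh γ (Qstar x) := by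
    intro x
    by_cases hx : x = x₀
    · rw [hx]
    · obtain ⟨b1, b2⟩ := hbounds x hx
      exact FocalAux.hh_le hγ (hq0 x) (hQle x) (hq1 x₀)
        (FocalAux.key (hq0 x) (hQle x) b1 b2 (hq1 x₀))
  have hsum : ∑ x, P x ≤ ∑ x, α / FocalAux.hh γ (Qstar x₀) * Qstar x := by
    apply Finset.sum_le_sum
    intro x _
    rw [hPeq x, div_mul_eq_mul_div]
    exact div_le_div_of_nonneg_left (mul_pos hα (hq0 x)).le (hh0 x₀) (hhle x)
  rw [← Finset.mul_sum, hPsum, hQstarsum, mul_one] at hsum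
  rw [hPeq x₀, ← div_mul_eq_mul_div]
  exact le_mul_of_one_le_left (hq0 x₀).le hsum
end

section
/- Let X be a countable set and let P : X → ℝ satisfy P(x) ≥ 0 for all x and ∑_x P(x) = 1. For γ ≥ 0 the family x ↦ P(x)^((1-P(x))^γ) (real powers, with 0^t = 0 for t > 0) is summable and satisfies 1 ≤ ∑_x P(x)^((1-P(x))^γ) ≤ exp(e^(1/e) · γ); equivalently, h_γ(P) = log ∑_x P(x)^((1-P(x))^γ) satisfies 0 ≤ h_γ(P) ≤ e^(1/e) · γ. Moreover, if P(x) > 0 for at least two distinct points x, then γ ↦ h_γ(P) is strictly increasing on [0,∞). -/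
lemma term_upper (p γ : ℝ) (h0 : 0 ≤ p) (h1 : p ≤ 1) (hγ : 0 ≤ γ) :
    p ^ ((1 - p) ^ γ) ≤ p * Real.exp γ := by
  rcases h0.eq_or_lt with rfl | h0
  · simp
  rcases h1.eq_or_lt with rfl | h1
  · simpa using hγ
  have hq : 0 < 1 - p := by linarith
  have e1 : p ^ ((1 - p) ^ γ) = p * Real.exp ((1 - (1 - p) ^ γ) * (-Real.log p)) := by
    rw [Real.rpow_def_of_pos h0]
    have h : Real.log p * (1 - p) ^ γ
        = Real.log p + (1 - (1 - p) ^ γ) * (-Real.log p) := by ring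
    rw [h, Real.exp_add, Real.exp_log h0]
  rw [e1]
  refine mul_le_mul_of_nonneg_left (Real.exp_le_exp.2 ?_) h0.le
  have hlp : 0 ≤ -Real.log p := by linarith [Real.log_neg h0 h1]
  have a1 : 1 - (1 - p) ^ γ ≤ γ * (-Real.log (1 - p)) := by
    rw [Real.rpow_def_of_pos hq]
    linarith [Real.add_one_le_exp (Real.log (1 - p) * γ)]
  have b1 : -Real.log p ≤ (1 - p) / p := by
    have := Real.log_le_sub_one_of_pos (inv_pos.2 h0)
    rw [Real.log_inv] at this
    have e : (1 - p) / p = p⁻¹ - 1 := by field_simp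
    rw [e]; exact this
  have b2 : -Real.log (1 - p) ≤ p / (1 - p) := by
    have := Real.log_le_sub_one_of_pos (inv_pos.2 hq)
    rw [Real.log_inv] at this
    have e : p / (1 - p) = (1 - p)⁻¹ - 1 := by field_simp; ring
    rw [e]; exact this
  calc (1 - (1 - p) ^ γ) * (-Real.log p)
      ≤ (γ * (-Real.log (1 - p))) * (-Real.log p) := mul_le_mul_of_nonneg_right a1 hlp
    _ ≤ (γ * (p / (1 - p))) * ((1 - p) / p) := by
        refine mul_le_mul (mul_le_mul_of_nonneg_left b2 hγ) b1 hlp (by positivity)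
    _ = γ := by field_simp

lemma term_lt (p a b : ℝ) (h0 : 0 < p) (h1 : p < 1) (hab : a < b) :
    p ^ ((1 - p) ^ a) < p ^ ((1 - p) ^ b) :=
  Real.rpow_lt_rpow_of_exponent_gt h0 h1
    (Real.rpow_lt_rpow_of_exponent_gt (by linarith) (by linarith) hab)

lemma term_lower (p γ : ℝ) (h0 : 0 ≤ p) (h1 : p ≤ 1) (hγ : 0 ≤ γ) :
    p ≤ p ^ ((1 - p) ^ γ) := by
  rcases h0.eq_or_lt with rfl | h0
  · simp
  have := Real.rpow_le_rpow_of_exponent_ge h0 h1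
    (Real.rpow_le_one (by linarith : 0 ≤ 1 - p) (by linarith) hγ)
  simpa using this

/-- for a probability mass function `P` on a countable set and
`γ ≥ 0`, the family `x ↦ P x ^ ((1 - P x)^γ)` is summable with
`1 ≤ ∑ ≤ exp(e^(1/e) γ)`; equivalently `0 ≤ h_γ(P) ≤ e^(1/e) γ` where
`h_γ(P) = log ∑_x P x ^ ((1 - P x)^γ)`. Moreover if `P` has at least two support
points, `γ ↦ h_γ(P)` is strictly increasing on `[0,∞)`. -/
theorem hGamma_bounds_and_strictMono
    {X : Type*} [Countable X] (P : X → ℝ) (hP : ∀ x, 0 ≤ P x)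
    (hPs : Summable P) (hPsum : ∑' x, P x = 1) :
    (∀ γ : ℝ, 0 ≤ γ →
      Summable (fun x => P x ^ ((1 - P x) ^ γ)) ∧
      1 ≤ ∑' x, P x ^ ((1 - P x) ^ γ) ∧
      ∑' x, P x ^ ((1 - P x) ^ γ) ≤ Real.exp (Real.exp (1 / Real.exp 1) * γ) ∧
      0 ≤ Real.log (∑' x, P x ^ ((1 - P x) ^ γ)) ∧
      Real.log (∑' x, P x ^ ((1 - P x) ^ γ)) ≤ Real.exp (1 / Real.exp 1) * γ) ∧
    ((∃ x y : X, x ≠ y ∧ 0 < P x ∧ 0 < P y) →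
      StrictMonoOn (fun γ : ℝ => Real.log (∑' x, P x ^ ((1 - P x) ^ γ)))
        (Set.Ici 0)) := by
  have hP1 : ∀ x, P x ≤ 1 := fun x => hPsum ▸ hPs.le_tsum x (fun y _ => hP y)
  have hS : ∀ γ : ℝ, 0 ≤ γ → Summable (fun x => P x ^ ((1 - P x) ^ γ)) := fun γ hγ =>
    Summable.of_nonneg_of_le (fun x => Real.rpow_nonneg (hP x) _)
      (fun x => term_upper (P x) γ (hP x) (hP1 x) hγ) (hPs.mul_right _)
  have hL : ∀ γ : ℝ, 0 ≤ γ → 1 ≤ ∑' x, P x ^ ((1 - P x) ^ γ) := fun γ hγ => by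
    refine hPsum.ge.trans ?_
    exact hPs.tsum_le_tsum (fun x => term_lower (P x) γ (hP x) (hP1 x) hγ) (hS γ hγ)
  have hU : ∀ γ : ℝ, 0 ≤ γ →
      ∑' x, P x ^ ((1 - P x) ^ γ) ≤ Real.exp (Real.exp (1 / Real.exp 1) * γ) := fun γ hγ => by
    calc ∑' x, P x ^ ((1 - P x) ^ γ) ≤ ∑' x, P x * Real.exp γ :=
          (hS γ hγ).tsum_le_tsum (fun x => term_upper (P x) γ (hP x) (hP1 x) hγ)
            (hPs.mul_right _)
      _ = Real.exp γ := by rw [tsum_mul_right, hPsum, one_mul]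
      _ ≤ _ := by
        refine Real.exp_le_exp.2 (le_mul_of_one_le_left hγ (Real.one_le_exp (by positivity)))
  refine ⟨fun γ hγ => ⟨hS γ hγ, hL γ hγ, hU γ hγ, Real.log_nonneg (hL γ hγ), ?_⟩, ?_⟩
  · rw [Real.log_le_iff_le_exp (by linarith [hL γ hγ])]
    exact hU γ hγ
  · rintro ⟨x, y, hxy, hx, hy⟩ a ha b hb hab
    have hlt : ∀ z, P z < 1 := by
      intro z
      obtain ⟨w, hwz, hw⟩ : ∃ w, z ≠ w ∧ 0 < P w := by
        by_cases h : z = x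
        · exact ⟨y, h ▸ hxy, hy⟩
        · exact ⟨x, h, hx⟩
      classical
      have h2 := hPs.sum_le_tsum {z, w} (fun i _ => hP i)
      rw [Finset.sum_pair hwz, hPsum] at h2
      linarith
    refine Real.log_lt_log (by linarith [hL a ha]) ?_
    refine Summable.tsum_lt_tsum (i := x) (fun z => ?_) (term_lt _ _ _ hx (hlt x) hab)
      (hS a ha) (hS b hb)
    rcases (hP z).eq_or_lt with h | h
    · simp [← h]
    · exact (term_lt _ _ _ h (hlt z) hab).le
end

section
/- Let γ ≥ 0, let S be a nonempty finite set, and let P : S → ℝ satisfy P(x) > 0 for all x ∈ S and ∑_{x∈S} P(x) = 1. Let m₀ be the infimum over all Q : S → ℝ with 0 < Q(x) ≤ 1 and ∑_{x∈S} Q(x) = 1 of H_0(P,Q) = ∑_{x∈S} P(x)·log(1/Q(x)), and let m_γ be the infimum over the same set of Q of H_γ(P,Q) = ∑_{x∈S} P(x)·(1-Q(x))^γ·log(1/Q(x)). Then 0 ≤ m₀ − m_γ ≤ e^(1/e) · γ. -/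
lemma focal_pointwise (γ q : ℝ) (hγ : 0 ≤ γ) (h0 : 0 < q) (h1 : q ≤ 1) :
    0 ≤ (1 - q) ^ γ * Real.log (1 / q) ∧
    (1 - q) ^ γ * Real.log (1 / q) ≤ Real.log (1 / q) ∧
    Real.log (1 / q) ≤ (1 - q) ^ γ * Real.log (1 / q) + γ := by
  have hL : 0 ≤ Real.log (1 / q) := Real.log_nonneg (by rw [le_div_iff₀ h0]; linarith)
  have hr0 : 0 ≤ (1 - q) ^ γ := Real.rpow_nonneg (by linarith) _
  have hr1 : (1 - q) ^ γ ≤ 1 := Real.rpow_le_one (by linarith) (by linarith) hγ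
  refine ⟨mul_nonneg hr0 hL, mul_le_of_le_one_left hL hr1, ?_⟩
  rcases h1.eq_or_lt with h | h
  · subst h; simpa using hγ
  have hq : 0 < 1 - q := by linarith
  have hL2 : Real.log (1 / q) ≤ (1 - q) / q := by
    have := Real.log_le_sub_one_of_pos (x := 1 / q) (by positivity)
    have e : (1 - q) / q = 1 / q - 1 := by field_simp
    linarith
  have hlog : -Real.log (1 - q) ≤ q / (1 - q) := by
    have := Real.log_le_sub_one_of_pos (x := 1 / (1 - q)) (by positivity)
    have e : q / (1 - q) = 1 / (1 - q) - 1 := by field_simp; ring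
    rw [one_div, Real.log_inv, ← one_div] at this
    linarith
  have hr : 1 - (1 - q) ^ γ ≤ γ * (q / (1 - q)) := by
    rw [Real.rpow_def_of_pos hq]
    have := Real.add_one_le_exp (Real.log (1 - q) * γ)
    nlinarith [mul_le_mul_of_nonneg_left hlog hγ]
  have : (1 - (1 - q) ^ γ) * Real.log (1 / q) ≤ γ * (q / (1 - q)) * ((1 - q) / q) :=
    mul_le_mul hr hL2 hL (by positivity)
  have e : γ * (q / (1 - q)) * ((1 - q) / q) = γ := by field_simp
  linarith

/-- the difference between the infimum of the cross-entropy and the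
infimum of the focal-entropy (over probability vectors `Q` with `0 < Q x ≤ 1`)
satisfies `0 ≤ m₀ − m_γ ≤ e^(1/e) γ`. -/
theorem inf_crossEntropy_sub_inf_focalEntropy_bounds
    {ι : Type*} [Fintype ι] [Nonempty ι] (γ : ℝ) (hγ : 0 ≤ γ)
    (P : ι → ℝ) (hP : ∀ x, 0 < P x) (hPsum : ∑ x, P x = 1) :
    0 ≤ sInf ((fun Q : ι → ℝ => ∑ x, P x * Real.log (1 / Q x)) ''
          {Q | (∀ x, 0 < Q x ∧ Q x ≤ 1) ∧ ∑ x, Q x = 1}) -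
        sInf ((fun Q : ι → ℝ => ∑ x, P x * (1 - Q x) ^ γ * Real.log (1 / Q x)) ''
          {Q | (∀ x, 0 < Q x ∧ Q x ≤ 1) ∧ ∑ x, Q x = 1}) ∧
    sInf ((fun Q : ι → ℝ => ∑ x, P x * Real.log (1 / Q x)) ''
          {Q | (∀ x, 0 < Q x ∧ Q x ≤ 1) ∧ ∑ x, Q x = 1}) -
        sInf ((fun Q : ι → ℝ => ∑ x, P x * (1 - Q x) ^ γ * Real.log (1 / Q x)) ''
          {Q | (∀ x, 0 < Q x ∧ Q x ≤ 1) ∧ ∑ x, Q x = 1}) ≤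
      Real.exp (1 / Real.exp 1) * γ := by
  set A : Set (ι → ℝ) := {Q | (∀ x, 0 < Q x ∧ Q x ≤ 1) ∧ ∑ x, Q x = 1} with hA
  have hPA : P ∈ A := ⟨fun x => ⟨hP x, hPsum ▸
    Finset.single_le_sum (fun i _ => (hP i).le) (Finset.mem_univ x)⟩, hPsum⟩
  have key : ∀ Q ∈ A, 0 ≤ ∑ x, P x * (1 - Q x) ^ γ * Real.log (1 / Q x) ∧
      ∑ x, P x * (1 - Q x) ^ γ * Real.log (1 / Q x) ≤ ∑ x, P x * Real.log (1 / Q x) ∧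
      ∑ x, P x * Real.log (1 / Q x) ≤
        ∑ x, P x * (1 - Q x) ^ γ * Real.log (1 / Q x) + γ := by
    intro Q hQ
    have h := fun x => focal_pointwise γ (Q x) hγ (hQ.1 x).1 (hQ.1 x).2
    simp only [mul_assoc]
    refine ⟨Finset.sum_nonneg fun x _ => mul_nonneg (hP x).le (h x).1,
      Finset.sum_le_sum fun x _ => mul_le_mul_of_nonneg_left (h x).2.1 (hP x).le, ?_⟩
    calc _ ≤ ∑ x, P x * ((1 - Q x) ^ γ * Real.log (1 / Q x) + γ) :=
          Finset.sum_le_sum fun x _ => mul_le_mul_of_nonneg_left (h x).2.2 (hP x).le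
      _ = _ := by
          simp only [mul_add, Finset.sum_add_distrib]
          rw [← Finset.sum_mul, hPsum, one_mul]
  have hbg : BddBelow ((fun Q : ι → ℝ =>
      ∑ x, P x * (1 - Q x) ^ γ * Real.log (1 / Q x)) '' A) := by
    refine ⟨0, ?_⟩
    rintro _ ⟨Q, hQ, rfl⟩
    exact (key Q hQ).1
  have hbf : BddBelow ((fun Q : ι → ℝ => ∑ x, P x * Real.log (1 / Q x)) '' A) := by
    refine ⟨0, ?_⟩
    rintro _ ⟨Q, hQ, rfl⟩
    exact (key Q hQ).1.trans (key Q hQ).2.1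
  constructor
  · rw [sub_nonneg]
    apply le_csInf (Set.Nonempty.image _ ⟨P, hPA⟩)
    rintro _ ⟨Q, hQ, rfl⟩
    exact (csInf_le hbg ⟨Q, hQ, rfl⟩).trans (key Q hQ).2.1
  · have hc : γ ≤ Real.exp (1 / Real.exp 1) * γ :=
      le_mul_of_one_le_left hγ (Real.one_le_exp (by positivity))
    refine le_trans ?_ hc
    rw [sub_le_comm]
    apply le_csInf (Set.Nonempty.image _ ⟨P, hPA⟩)
    rintro _ ⟨Q, hQ, rfl⟩
    have := (csInf_le hbf ⟨Q, hQ, rfl⟩).trans (key Q hQ).2.2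
    rw [sub_le_iff_le_add]
    exact this
end
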